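/- There exists a constant C > 0, depending only on α and β, with the following property. Let (u_k, λ_k, f_k) be a sequence of real Dirichlet quasimode data on the stadium S with ‖u_k‖_{L²(S)} = 1 for all k, λ_k → ∞, and ‖f_k‖_{L²(S)} → 0 (an o(1) quasimode). Then for all sufficiently large k, ‖u_k‖_{L²(W)} ≥ C λ_k^{−4}, where ‖u_k‖_{L²(W)} is the L² norm of u_k over the wings W. -/

import Mathlib

open MeasureTheory Real Set Filter

noncomputable section

/-- Partial derivative in the first (x) variable. -/
def pdx (u : ℝ × ℝ → ℝ) (p : ℝ × ℝ) : ℝ := deriv (fun t => u (t, p.2)) p.1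

/-- Partial derivative in the second (y) variable. -/
def pdy (u : ℝ × ℝ → ℝ) (p : ℝ × ℝ) : ℝ := deriv (fun t => u (p.1, t)) p.2

/-- The positive Laplacian `Δu = -u_xx - u_yy`. -/
def lap (u : ℝ × ℝ → ℝ) (p : ℝ × ℝ) : ℝ := -(pdx (pdx u) p) - (pdy (pdy u) p)

/-- The central rectangle `R = [-α,α] × [-β,β]`. -/
def Rect (α β : ℝ) : Set (ℝ × ℝ) := Icc (-α) α ×ˢ Icc (-β) β

/-- The wings `W = W₊ ∪ W₋`, two half-discs of radius β centered at `(±α, 0)`. -/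
def Wings (α β : ℝ) : Set (ℝ × ℝ) :=
  {p | (p.1 - α) ^ 2 + p.2 ^ 2 ≤ β ^ 2 ∧ α ≤ p.1} ∪
  {p | (p.1 + α) ^ 2 + p.2 ^ 2 ≤ β ^ 2 ∧ p.1 ≤ -α}

/-- The Bunimovich stadium `S = R ∪ W`. -/
def Stadium (α β : ℝ) : Set (ℝ × ℝ) := Rect α β ∪ Wings α β

/-- The boundary `∂S`: two horizontal segments and two semicircles. -/
def StadiumBoundary (α β : ℝ) : Set (ℝ × ℝ) :=
  {p | |p.1| ≤ α ∧ (p.2 = β ∨ p.2 = -β)} ∪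
  {p | (|p.1| - α) ^ 2 + p.2 ^ 2 = β ^ 2 ∧ α ≤ |p.1|}

/-- Boundary integral `∫_{∂S} g dl` of an integrand `g` depending on the boundary point
and the outward unit normal at that point. -/
def bdryInt (α β : ℝ) (g : ℝ × ℝ → ℝ × ℝ → ℝ) : ℝ :=
  (∫ x in (-α)..α, (g (x, β) (0, 1) + g (x, -β) (0, -1))) +
  β * ∫ θ in (-(π / 2))..(π / 2),
    (g (α + β * cos θ, β * sin θ) (cos θ, sin θ) +
     g (-(α + β * cos θ), β * sin θ) (-cos θ, sin θ))

/-- Boundary integral `∫_{∂S ∩ W} g dl` over the two semicircles only. -/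
def bdryIntW (α β : ℝ) (g : ℝ × ℝ → ℝ × ℝ → ℝ) : ℝ :=
  β * ∫ θ in (-(π / 2))..(π / 2),
    (g (α + β * cos θ, β * sin θ) (cos θ, sin θ) +
     g (-(α + β * cos θ), β * sin θ) (-cos θ, sin θ))

/-- The normal derivative `∂_N u = n₁ ∂_x u + n₂ ∂_y u` at a boundary point `p`
with outward unit normal `n`. -/
def nderiv (u : ℝ × ℝ → ℝ) (p n : ℝ × ℝ) : ℝ := n.1 * pdx u p + n.2 * pdy u p

/-- A real Dirichlet quasimode datum `(u, λ, f)` on the stadium: `λ > 0`, `u` smooth on a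
neighborhood of `S`, `u = 0` on `∂S`, and `(Δ - λ²) u = f` on `S`. -/
structure QMDatum (α β : ℝ) where
  u : ℝ × ℝ → ℝ
  lam : ℝ
  f : ℝ × ℝ → ℝ
  lam_pos : 0 < lam
  smooth : ∃ V : Set (ℝ × ℝ), IsOpen V ∧ Stadium α β ⊆ V ∧ ContDiffOn ℝ (⊤ : ℕ∞) u V
  dirichlet : ∀ p ∈ StadiumBoundary α β, u p = 0
  eqn : ∀ p ∈ Stadium α β, lap u p - lam ^ 2 * u p = f p

/-! Everything is measured by `a = ‖∂ₓu‖`, which controls `‖u‖` by the Poincaré inequality, as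
`u = 0` on `∂S`. Write `h = (Δ - λ²)u`, `n₁` for the first component of the outward normal and
`w = ‖u‖_{L²(W₊)}`. The Rellich identity, the divergence theorem for a field quadratic in `∇u`
attached to a multiplier `(X, Y)`, is used with three multipliers.

* `(x + α + β, 0)` on `S` bounds `a²` by `‖h‖ a` and `∫ n₁ (∂_N u)²` over the right semicircle.
* `(x, y)` on `S` gives the crude bound `∫ (∂_N u)² ≲ λ² a² + λ² ‖h‖²` over that semicircle.
* `s² (s, y)` with `s = x - α` on `W₊` bounds `∫ n₁² (∂_N u)²` by `∫_{W₊} s |∇u|²`, which Green's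
  formula with weight `s` bounds by `λ² w²` and `w a`.

By AM-GM `2 n₁ ≤ ε + n₁² / ε`; taking `ε` a small multiple of `λ⁻²` absorbs the crude bound into
`a²` and leaves `a² ≲ t a + t²` with `t = ‖h‖ + λ⁴ w`. Hence `‖u‖ ≲ ‖h‖ + λ⁴ w`. -/

section PartialDerivatives

variable {u v : ℝ × ℝ → ℝ} {p : ℝ × ℝ}

theorem hasDerivAt_comp_curve (hu : Differentiable ℝ u) {a b : ℝ → ℝ} {a' b' t : ℝ}
    (ha : HasDerivAt a a' t) (hb : HasDerivAt b b' t) :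
    HasDerivAt (fun t => u (a t, b t))
      (a' * fderiv ℝ u (a t, b t) (1, 0) + b' * fderiv ℝ u (a t, b t) (0, 1)) t := by
  have h := (hu (a t, b t)).hasFDerivAt.comp_hasDerivAt t (ha.prodMk hb)
  have basis : ((a', b') : ℝ × ℝ) = a' • ((1, 0) : ℝ × ℝ) + b' • ((0, 1) : ℝ × ℝ) := by
    ext <;> simp
  rwa [basis, map_add, map_smul, map_smul, smul_eq_mul, smul_eq_mul] at h

theorem pdx_eq_fderiv (hu : Differentiable ℝ u) : pdx u = fun p => fderiv ℝ u p (1, 0) := by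
  ext ⟨x, y⟩
  simpa [pdx] using (hasDerivAt_comp_curve hu (hasDerivAt_id' x) (hasDerivAt_const x y)).deriv

theorem pdy_eq_fderiv (hu : Differentiable ℝ u) : pdy u = fun p => fderiv ℝ u p (0, 1) := by
  ext ⟨x, y⟩
  simpa [pdy] using (hasDerivAt_comp_curve hu (hasDerivAt_const y x) (hasDerivAt_id' y)).deriv

theorem hasDerivAt_curve (hu : Differentiable ℝ u) {a b : ℝ → ℝ} {a' b' t : ℝ}
    (ha : HasDerivAt a a' t) (hb : HasDerivAt b b' t) :
    HasDerivAt (fun t => u (a t, b t)) (a' * pdx u (a t, b t) + b' * pdy u (a t, b t)) t := by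
  rw [pdx_eq_fderiv hu, pdy_eq_fderiv hu]
  exact hasDerivAt_comp_curve hu ha hb

theorem hasDerivAt_pdx (hu : Differentiable ℝ u) (p : ℝ × ℝ) :
    HasDerivAt (fun t => u (t, p.2)) (pdx u p) p.1 := by
  simpa using hasDerivAt_curve hu (hasDerivAt_id' p.1) (hasDerivAt_const p.1 p.2)

theorem hasDerivAt_pdy (hu : Differentiable ℝ u) (p : ℝ × ℝ) :
    HasDerivAt (fun t => u (p.1, t)) (pdy u p) p.2 := by
  simpa using hasDerivAt_curve hu (hasDerivAt_const p.2 p.1) (hasDerivAt_id' p.2)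

theorem contDiff_pdx {m n : WithTop ℕ∞} (hu : ContDiff ℝ n u) (hmn : m + 1 ≤ n) :
    ContDiff ℝ m (pdx u) := by
  rw [pdx_eq_fderiv (hu.differentiable (by rintro rfl; simp at hmn))]
  exact (hu.fderiv_right hmn).clm_apply contDiff_const

theorem contDiff_pdy {m n : WithTop ℕ∞} (hu : ContDiff ℝ n u) (hmn : m + 1 ≤ n) :
    ContDiff ℝ m (pdy u) := by
  rw [pdy_eq_fderiv (hu.differentiable (by rintro rfl; simp at hmn))]
  exact (hu.fderiv_right hmn).clm_apply contDiff_const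

theorem pdx_pdy_comm (hu : ContDiff ℝ 2 u) : pdx (pdy u) = pdy (pdx u) := by
  have hx := contDiff_pdx hu one_add_one_eq_two.le
  have hy := contDiff_pdy hu one_add_one_eq_two.le
  have hd : Differentiable ℝ (fderiv ℝ u) :=
    (hu.fderiv_right one_add_one_eq_two.le).differentiable one_ne_zero
  have second (p v w : ℝ × ℝ) :
      fderiv ℝ (fun q => fderiv ℝ u q v) p w = fderiv ℝ (fderiv ℝ u) p w v := by
    simp [fderiv_clm_apply (hd p) (differentiableAt_const v)]
  rw [pdx_eq_fderiv (hy.differentiable one_ne_zero), pdy_eq_fderiv (hx.differentiable one_ne_zero),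
    pdx_eq_fderiv (hu.differentiable two_ne_zero), pdy_eq_fderiv (hu.differentiable two_ne_zero)]
  ext p
  rw [second, second]
  exact hu.contDiffAt.isSymmSndFDerivAt (by simp) _ _

theorem pdx_congr (h : u =ᶠ[nhds p] v) : pdx u p = pdx v p :=
  Filter.EventuallyEq.deriv_eq <|
    (Continuous.tendsto' (by fun_prop) _ _ rfl :
      Tendsto (fun t => (t, p.2)) _ (nhds p)).eventually h

theorem pdy_congr (h : u =ᶠ[nhds p] v) : pdy u p = pdy v p :=
  Filter.EventuallyEq.deriv_eq <|
    (Continuous.tendsto' (by fun_prop) _ _ rfl :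
      Tendsto (fun t => (p.1, t)) _ (nhds p)).eventually h

theorem lap_congr (h : u =ᶠ[nhds p] v) : lap u p = lap v p := by
  have hx : pdx u =ᶠ[nhds p] pdx v := h.eventually_nhds.mono fun _ => pdx_congr
  have hy : pdy u =ᶠ[nhds p] pdy v := h.eventually_nhds.mono fun _ => pdy_congr
  rw [lap, lap, pdx_congr hx, pdy_congr hy]

end PartialDerivatives

section Slices

theorem integrableOn_of_continuous {X E : Type*} [TopologicalSpace X] [T2Space X] [MeasureSpace X]
    [OpensMeasurableSpace X] [IsFiniteMeasureOnCompacts (volume : Measure X)]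
    [NormedAddCommGroup E] {Ω : Set X} {g : X → E} (hΩ : IsCompact Ω) (hg : Continuous g) :
    IntegrableOn g Ω :=
  hg.continuousOn.integrableOn_compact hΩ

variable {Ω : Set (ℝ × ℝ)} {a b : ℝ} {l r : ℝ → ℝ} {g : ℝ × ℝ → ℝ}

theorem setIntegral_eq_integral_slices (hΩ : MeasurableSet Ω) (hab : a ≤ b)
    (hlr : ∀ x ∈ Icc a b, l x ≤ r x)
    (hmem : ∀ x y, (x, y) ∈ Ω ↔ x ∈ Icc a b ∧ y ∈ Icc (l x) (r x)) (hg : IntegrableOn g Ω) :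
    ∫ p in Ω, g p = ∫ x in a..b, ∫ y in l x..r x, g (x, y) := by
  have slice (x : ℝ) : ∫ y, Ω.indicator g (x, y)
      = (Icc a b).indicator (fun x => ∫ y in l x..r x, g (x, y)) x := by
    by_cases hx : x ∈ Icc a b
    · rw [indicator_of_mem hx, intervalIntegral.integral_of_le (hlr x hx),
        ← integral_Icc_eq_integral_Ioc, ← integral_indicator measurableSet_Icc]
      congr 1 with y
      simp only [indicator, hmem, hx, true_and]
    · simp [indicator, hmem, hx]
  rw [← integral_indicator hΩ, Measure.volume_eq_prod,
    integral_prod _ ((integrable_indicator_iff hΩ).2 hg)]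
  simp_rw [slice]
  rw [integral_indicator measurableSet_Icc, integral_Icc_eq_integral_Ioc,
    intervalIntegral.integral_of_le hab]

theorem setIntegral_pdy_eq (hΩ : IsCompact Ω) (hab : a ≤ b) (hlr : ∀ x ∈ Icc a b, l x ≤ r x)
    (hmem : ∀ x y, (x, y) ∈ Ω ↔ x ∈ Icc a b ∧ y ∈ Icc (l x) (r x)) (hg : ContDiff ℝ 1 g) :
    ∫ p in Ω, pdy g p = ∫ x in a..b, (g (x, r x) - g (x, l x)) := by
  have hcont : Continuous (pdy g) := (contDiff_pdy hg (zero_add 1).le).continuous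
  rw [setIntegral_eq_integral_slices hΩ.measurableSet hab hlr hmem
    (integrableOn_of_continuous hΩ hcont)]
  congr 1 with x
  exact intervalIntegral.integral_eq_sub_of_hasDerivAt (f := fun y => g (x, y))
    (f' := fun y => pdy g (x, y))
    (fun y _ => hasDerivAt_pdy (hg.differentiable one_ne_zero) (x, y))
    (Continuous.intervalIntegrable (by fun_prop) _ _)

theorem setIntegral_pdx_eq (hΩ : IsCompact Ω) (hab : a ≤ b) (hlr : ∀ y ∈ Icc a b, l y ≤ r y)
    (hmem : ∀ x y, (x, y) ∈ Ω ↔ y ∈ Icc a b ∧ x ∈ Icc (l y) (r y)) (hg : ContDiff ℝ 1 g) :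
    ∫ p in Ω, pdx g p = ∫ y in a..b, (g (r y, y) - g (l y, y)) := by
  have hswap : MeasurePreserving (Prod.swap : ℝ × ℝ → ℝ × ℝ) := Measure.measurePreserving_swap
  rw [← hswap.setIntegral_preimage_emb MeasurableEquiv.prodComm.measurableEmbedding]
  exact setIntegral_pdy_eq (g := g ∘ Prod.swap)
    ((Homeomorph.prodComm ℝ ℝ).isCompact_preimage.2 hΩ) hab hlr (fun y x => hmem x y)
    (hg.comp (contDiff_snd.prodMk contDiff_fst))

end Slices

section Geometry

variable {α β : ℝ}

/-- The half-disc `W₊`, one of the two connected pieces of `Wings α β`. -/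
def RightWing (α β : ℝ) : Set (ℝ × ℝ) := {p | (p.1 - α) ^ 2 + p.2 ^ 2 ≤ β ^ 2 ∧ α ≤ p.1}

/-- The half-disc `W₋`, the mirror image of `RightWing α β`. -/
def LeftWing (α β : ℝ) : Set (ℝ × ℝ) := {p | (p.1 + α) ^ 2 + p.2 ^ 2 ≤ β ^ 2 ∧ p.1 ≤ -α}

theorem stadium_eq_union : Stadium α β = Rect α β ∪ (RightWing α β ∪ LeftWing α β) := rfl

theorem rightWing_subset_wings : RightWing α β ⊆ Wings α β := subset_union_left

theorem wings_subset_stadium : Wings α β ⊆ Stadium α β := subset_union_right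

theorem mem_rightWing_iff_snd_mem_Icc (hβ : 0 ≤ β) (x y : ℝ) : (x, y) ∈ RightWing α β ↔
    x ∈ Icc α (α + β) ∧ y ∈ Icc (-√(β ^ 2 - (x - α) ^ 2)) √(β ^ 2 - (x - α) ^ 2) := by
  have hsq : (x - α) ^ 2 + y ^ 2 ≤ β ^ 2 ↔ y ^ 2 ≤ β ^ 2 - (x - α) ^ 2 := by
    rw [add_comm, le_sub_iff_add_le]
  constructor
  · rintro ⟨hdisc : (x - α) ^ 2 + y ^ 2 ≤ β ^ 2, hx : α ≤ x⟩
    have hxβ : x - α ≤ β := le_of_sq_le_sq (by nlinarith [sq_nonneg y]) hβ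
    exact ⟨⟨hx, by linarith⟩, abs_le.1 (abs_le_sqrt (hsq.1 hdisc))⟩
  · rintro ⟨⟨hx, hxβ⟩, hy⟩
    exact ⟨hsq.2 ((Real.sq_le (by nlinarith)).2 hy), hx⟩

theorem mem_rightWing_iff_fst_mem_Icc (hβ : 0 ≤ β) (x y : ℝ) : (x, y) ∈ RightWing α β ↔
    y ∈ Icc (-β) β ∧ x ∈ Icc α (α + √(β ^ 2 - y ^ 2)) := by
  have hsq : (x - α) ^ 2 + y ^ 2 ≤ β ^ 2 ↔ (x - α) ^ 2 ≤ β ^ 2 - y ^ 2 := by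
    rw [le_sub_iff_add_le]
  constructor
  · rintro ⟨hdisc : (x - α) ^ 2 + y ^ 2 ≤ β ^ 2, hx : α ≤ x⟩
    have hxr : x - α ≤ √(β ^ 2 - y ^ 2) := le_sqrt_of_sq_le (hsq.1 hdisc)
    exact ⟨abs_le_of_sq_le_sq' (by nlinarith [sq_nonneg (x - α)]) hβ, hx, by linarith⟩
  · rintro ⟨hy, hx, hxr⟩
    have hy' : y ^ 2 ≤ β ^ 2 := sq_le_sq' hy.1 hy.2
    exact ⟨hsq.2 ((Real.sq_le (by linarith)).2 ⟨by linarith [sqrt_nonneg (β ^ 2 - y ^ 2)],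
      by linarith⟩), hx⟩

theorem isCompact_rightWing (hβ : 0 ≤ β) : IsCompact (RightWing α β) := by
  refine (isCompact_Icc.prod isCompact_Icc).of_isClosed_subset ?_
    (fun p hp => ⟨((mem_rightWing_iff_snd_mem_Icc hβ p.1 p.2).1 hp).1,
      ((mem_rightWing_iff_fst_mem_Icc hβ p.1 p.2).1 hp).1⟩)
  have hdisc : Continuous fun p : ℝ × ℝ => (p.1 - α) ^ 2 + p.2 ^ 2 := by fun_prop
  exact (isClosed_le hdisc continuous_const).inter
    (isClosed_le continuous_const continuous_fst)

/-- The reflection in the axis `x = 0`, which exchanges the two wings. -/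
def reflectX : ℝ × ℝ ≃ₜ ℝ × ℝ := (Homeomorph.neg ℝ).prodCongr (Homeomorph.refl ℝ)

theorem reflectX_apply (p : ℝ × ℝ) : reflectX p = (-p.1, p.2) := rfl

theorem measurePreserving_reflectX : MeasurePreserving reflectX :=
  (Measure.measurePreserving_neg (volume : Measure ℝ)).prod (MeasurePreserving.id volume)

theorem reflectX_preimage_rightWing : reflectX ⁻¹' RightWing α β = LeftWing α β := by
  ext ⟨x, y⟩
  have : (-x - α) ^ 2 = (x + α) ^ 2 := by ring
  simp [reflectX_apply, RightWing, LeftWing, this, le_neg]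

theorem isCompact_leftWing (hβ : 0 ≤ β) : IsCompact (LeftWing α β) :=
  reflectX_preimage_rightWing ▸ reflectX.isCompact_preimage.2 (isCompact_rightWing hβ)

theorem isCompact_rect : IsCompact (Rect α β) := isCompact_Icc.prod isCompact_Icc

theorem isCompact_stadium (hβ : 0 ≤ β) : IsCompact (Stadium α β) :=
  isCompact_rect.union ((isCompact_rightWing hβ).union (isCompact_leftWing hβ))

theorem stadiumBoundary_subset (hβ : 0 ≤ β) : StadiumBoundary α β ⊆ Stadium α β := by
  rintro ⟨x, y⟩ (⟨hx : |x| ≤ α, hy : y = β ∨ y = -β⟩ | ⟨harc, hx : α ≤ |x|⟩)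
  · refine Or.inl ⟨abs_le.1 hx, ?_⟩
    rcases hy with rfl | rfl <;> simp [hβ]
  · rcases le_total 0 x with h0 | h0
    · rw [abs_of_nonneg h0] at hx
      exact Or.inr (Or.inl ⟨by simpa [abs_of_nonneg h0] using harc.le, hx⟩)
    · rw [abs_of_nonpos h0] at hx
      have : (x + α) ^ 2 = (-x - α) ^ 2 := by ring
      exact Or.inr (Or.inr ⟨by simpa [abs_of_nonpos h0, this] using harc.le, le_neg.1 hx⟩)

theorem abs_le_of_mem_stadium (hα : 0 ≤ α) (hβ : 0 ≤ β) {p : ℝ × ℝ} (hp : p ∈ Stadium α β) :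
    |p.1| ≤ α + β ∧ |p.2| ≤ β := by
  rw [abs_le, abs_le]
  rcases hp with ⟨⟨hx, hx'⟩, hy⟩ | ⟨hdisc, hx⟩ | ⟨hdisc, hx⟩
  · exact ⟨⟨by linarith, by linarith⟩, hy⟩
  · have hx' := abs_le_of_sq_le_sq' (by linarith [sq_nonneg p.2] : (p.1 - α) ^ 2 ≤ β ^ 2) hβ
    exact ⟨⟨by linarith, by linarith⟩,
      abs_le_of_sq_le_sq' (by linarith [sq_nonneg (p.1 - α)]) hβ⟩
  · have hx' := abs_le_of_sq_le_sq' (by linarith [sq_nonneg p.2] : (p.1 + α) ^ 2 ≤ β ^ 2) hβ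
    exact ⟨⟨by linarith, by linarith⟩,
      abs_le_of_sq_le_sq' (by linarith [sq_nonneg (p.1 + α)]) hβ⟩

end Geometry

section DivergenceTheorem

variable {α β : ℝ} {F G : ℝ × ℝ → ℝ}

/-- The divergence of the planar vector field with components `F` and `G`. -/
def divergence (F G : ℝ × ℝ → ℝ) (p : ℝ × ℝ) : ℝ := pdx F p + pdy G p

/-- The flux density at `p`, in the direction `n`, of the vector field with components `F`, `G`;
it has the shape of an integrand of `bdryInt`. -/
def normalFlux (F G : ℝ × ℝ → ℝ) (p n : ℝ × ℝ) : ℝ := n.1 * F p + n.2 * G p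

/-- The part of the boundary integral `bdryInt` carried by the semicircle of `RightWing`. -/
def rightArcInt (α β : ℝ) (g : ℝ × ℝ → ℝ × ℝ → ℝ) : ℝ :=
  β * ∫ θ in (-(π / 2))..(π / 2), g (α + β * cos θ, β * sin θ) (cos θ, sin θ)

theorem intervalIntegral_arc_fst (hβ : 0 ≤ β) (hF : Continuous F) :
    ∫ y in (-β)..β, F (α + √(β ^ 2 - y ^ 2), y) = rightArcInt α β fun p n => n.1 * F p := by
  have hsub := intervalIntegral.integral_comp_mul_deriv (a := -(π / 2)) (b := π / 2)
    (f := fun θ => β * sin θ) (f' := fun θ => β * cos θ)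
    (g := fun y => F (α + √(β ^ 2 - y ^ 2), y))
    (fun θ _ => (Real.hasDerivAt_sin θ).const_mul β) (by fun_prop) (by fun_prop)
  simp only [sin_neg, sin_pi_div_two, mul_one, mul_neg] at hsub
  rw [← hsub, rightArcInt, ← intervalIntegral.integral_const_mul]
  refine intervalIntegral.integral_congr fun θ hθ => ?_
  rw [uIcc_of_le (by linarith [pi_pos])] at hθ
  have habscissa : √(β ^ 2 - (β * sin θ) ^ 2) = β * cos θ := by
    rw [show β ^ 2 - (β * sin θ) ^ 2 = (β * cos θ) ^ 2 by rw [mul_pow, mul_pow, cos_sq']; ring,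
      sqrt_sq (mul_nonneg hβ (cos_nonneg_of_mem_Icc hθ))]
  simp only [Function.comp, habscissa]
  ring

theorem intervalIntegral_upper_arc (hβ : 0 ≤ β) (hG : Continuous G) :
    ∫ x in α..(α + β), G (x, √(β ^ 2 - (x - α) ^ 2))
      = ∫ θ in (0)..(π / 2), β * (sin θ * G (α + β * cos θ, β * sin θ)) := by
  have hsub := intervalIntegral.integral_comp_mul_deriv (a := 0) (b := π / 2)
    (f := fun θ => α + β * cos θ) (f' := fun θ => β * -sin θ)
    (g := fun x => G (x, √(β ^ 2 - (x - α) ^ 2)))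
    (fun θ _ => ((Real.hasDerivAt_cos θ).const_mul β).const_add α) (by fun_prop) (by fun_prop)
  simp only [cos_zero, cos_pi_div_two, mul_one, mul_zero, add_zero] at hsub
  rw [intervalIntegral.integral_symm, ← hsub, ← intervalIntegral.integral_neg]
  refine intervalIntegral.integral_congr fun θ hθ => ?_
  rw [uIcc_of_le (by positivity)] at hθ
  have hordinate : √(β ^ 2 - (α + β * cos θ - α) ^ 2) = β * sin θ := by
    rw [show β ^ 2 - (α + β * cos θ - α) ^ 2 = (β * sin θ) ^ 2 by
        rw [add_sub_cancel_left, mul_pow, mul_pow, sin_sq]; ring,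
      sqrt_sq (mul_nonneg hβ (sin_nonneg_of_mem_Icc ⟨hθ.1, by linarith [hθ.2, pi_pos]⟩))]
  simp only [Function.comp, hordinate]
  ring

theorem intervalIntegral_arc_snd (hβ : 0 ≤ β) (hG : Continuous G) :
    ∫ x in α..(α + β), (G (x, √(β ^ 2 - (x - α) ^ 2)) - G (x, -√(β ^ 2 - (x - α) ^ 2)))
      = rightArcInt α β fun p n => n.2 * G p := by
  have lower := intervalIntegral_upper_arc (α := α) (G := fun p => G (p.1, -p.2)) hβ
    (by fun_prop)
  have flip := intervalIntegral.integral_comp_neg (a := 0) (b := π / 2)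
    fun θ => β * (sin θ * G (α + β * cos θ, β * sin θ))
  simp only [sin_neg, cos_neg, neg_mul, mul_neg, neg_zero,
    intervalIntegral.integral_neg] at flip
  rw [intervalIntegral.integral_sub (Continuous.intervalIntegrable (by fun_prop) _ _)
      (Continuous.intervalIntegrable (by fun_prop) _ _), intervalIntegral_upper_arc hβ hG, lower,
    sub_eq_add_neg, flip, add_comm, intervalIntegral.integral_add_adjacent_intervals
      (Continuous.intervalIntegrable (by fun_prop) _ _)
      (Continuous.intervalIntegrable (by fun_prop) _ _), intervalIntegral.integral_const_mul,
    rightArcInt]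

theorem continuous_divergence (hF : ContDiff ℝ 1 F) (hG : ContDiff ℝ 1 G) :
    Continuous (divergence F G) :=
  (contDiff_pdx hF (zero_add 1).le).continuous.add (contDiff_pdy hG (zero_add 1).le).continuous

theorem setIntegral_divergence_eq_add {Ω : Set (ℝ × ℝ)} (hΩ : IsCompact Ω)
    (hF : ContDiff ℝ 1 F) (hG : ContDiff ℝ 1 G) :
    ∫ p in Ω, divergence F G p = (∫ p in Ω, pdx F p) + ∫ p in Ω, pdy G p :=
  integral_add
    (integrableOn_of_continuous hΩ (contDiff_pdx hF (zero_add 1).le).continuous)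
    (integrableOn_of_continuous hΩ (contDiff_pdy hG (zero_add 1).le).continuous)

theorem setIntegral_divergence_rightWing (hβ : 0 ≤ β) (hF : ContDiff ℝ 1 F)
    (hG : ContDiff ℝ 1 G) :
    ∫ p in RightWing α β, divergence F G p
      = rightArcInt α β (normalFlux F G) - ∫ y in (-β)..β, F (α, y) := by
  have cF := hF.continuous
  have cG := hG.continuous
  rw [setIntegral_divergence_eq_add (isCompact_rightWing hβ) hF hG,
    setIntegral_pdx_eq (isCompact_rightWing hβ) (by linarith)
      (fun y _ => le_add_of_nonneg_right (sqrt_nonneg _)) (mem_rightWing_iff_fst_mem_Icc hβ) hF,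
    setIntegral_pdy_eq (isCompact_rightWing hβ) (by linarith)
      (fun x _ => neg_le_self (sqrt_nonneg _)) (mem_rightWing_iff_snd_mem_Icc hβ) hG,
    intervalIntegral_arc_snd hβ cG, intervalIntegral.integral_sub
      (Continuous.intervalIntegrable (by fun_prop) _ _)
      (Continuous.intervalIntegrable (by fun_prop) _ _), intervalIntegral_arc_fst hβ cF,
    sub_add_eq_add_sub, rightArcInt, rightArcInt, ← mul_add, ← intervalIntegral.integral_add
      (Continuous.intervalIntegrable (by fun_prop) _ _)
      (Continuous.intervalIntegrable (by fun_prop) _ _)]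
  rfl

theorem setIntegral_divergence_rect (hα : 0 ≤ α) (hβ : 0 ≤ β) (hF : ContDiff ℝ 1 F)
    (hG : ContDiff ℝ 1 G) :
    ∫ p in Rect α β, divergence F G p
      = (∫ x in (-α)..α, (G (x, β) - G (x, -β))) + (∫ y in (-β)..β, F (α, y))
        - ∫ y in (-β)..β, F (-α, y) := by
  have cF := hF.continuous
  rw [setIntegral_divergence_eq_add isCompact_rect hF hG,
    setIntegral_pdx_eq isCompact_rect (neg_le_self hβ) (fun _ _ => neg_le_self hα)
      (fun _ _ => and_comm) hF,
    setIntegral_pdy_eq isCompact_rect (neg_le_self hα) (fun _ _ => neg_le_self hβ)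
      (fun _ _ => Iff.rfl) hG,
    intervalIntegral.integral_sub (Continuous.intervalIntegrable (by fun_prop) _ _)
      (Continuous.intervalIntegrable (by fun_prop) _ _)]
  ring

theorem divergence_comp_reflectX (hF : Differentiable ℝ F) :
    divergence (fun p => -F (reflectX p)) (fun p => G (reflectX p))
      = fun p => divergence F G (reflectX p) := by
  ext p
  have hx : HasDerivAt (fun t => -F (reflectX (t, p.2))) (-(pdx F (reflectX p) * -1)) p.1 :=
    ((hasDerivAt_pdx hF (reflectX p)).comp p.1 (hasDerivAt_neg p.1)).neg
  rw [mul_neg_one, neg_neg] at hx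
  exact congrArg (· + pdy G (reflectX p)) hx.deriv

theorem setIntegral_divergence_leftWing (hβ : 0 ≤ β) (hF : ContDiff ℝ 1 F)
    (hG : ContDiff ℝ 1 G) :
    ∫ p in LeftWing α β, divergence F G p
      = rightArcInt α β (fun p n => normalFlux F G (-p.1, p.2) (-n.1, n.2))
        + ∫ y in (-β)..β, F (-α, y) := by
  have hreflect : ContDiff ℝ 1 reflectX := contDiff_fst.neg.prodMk contDiff_snd
  have hpull := measurePreserving_reflectX.setIntegral_preimage_emb
    reflectX.measurableEmbedding (fun p => divergence F G (reflectX p)) (RightWing α β)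
  have hinvol : ∀ p, reflectX (reflectX p) = p := fun p => by simp [reflectX_apply]
  simp only [reflectX_preimage_rightWing, hinvol] at hpull
  rw [hpull, ← divergence_comp_reflectX (hF.differentiable one_ne_zero),
    setIntegral_divergence_rightWing (F := fun p => -F (reflectX p))
      (G := fun p => G (reflectX p)) hβ (hF.comp hreflect).neg (hG.comp hreflect),
    intervalIntegral.integral_neg, sub_neg_eq_add]
  congr 2
  ext p n
  simp [normalFlux, reflectX_apply]

theorem bdryInt_eq_add {g : ℝ × ℝ → ℝ × ℝ → ℝ} (hg : Continuous fun q : _ × _ => g q.1 q.2) :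
    bdryInt α β g = (∫ x in (-α)..α, (g (x, β) (0, 1) + g (x, -β) (0, -1)))
      + rightArcInt α β g + rightArcInt α β fun p n => g (-p.1, p.2) (-n.1, n.2) := by
  have hg' : ∀ {c d : ℝ → ℝ × ℝ}, Continuous c → Continuous d → Continuous fun θ => g (c θ) (d θ) :=
    fun hc hd => hg.comp (hc.prodMk hd)
  rw [bdryInt, rightArcInt, rightArcInt, intervalIntegral.integral_add
    (f := fun θ => g (α + β * cos θ, β * sin θ) (cos θ, sin θ))
    ((hg' (by fun_prop) (by fun_prop)).intervalIntegrable _ _)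
    ((hg' (by fun_prop) (by fun_prop)).intervalIntegrable _ _)]
  ring

theorem volume_fst_eq (c : ℝ) : volume {p : ℝ × ℝ | p.1 = c} = 0 := by
  have : {p : ℝ × ℝ | p.1 = c} = {c} ×ˢ univ := by ext; simp
  rw [this, Measure.volume_eq_prod, Measure.prod_prod, volume_singleton, zero_mul]

theorem setIntegral_stadium (hα : 0 ≤ α) (hβ : 0 ≤ β) {g : ℝ × ℝ → ℝ} (hg : Continuous g) :
    ∫ p in Stadium α β, g p = (∫ p in Rect α β, g p) + (∫ p in RightWing α β, g p)
      + ∫ p in LeftWing α β, g p := by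
  have hint {K : Set (ℝ × ℝ)} (hK : IsCompact K) : IntegrableOn g K :=
    integrableOn_of_continuous hK hg
  have wings_disjoint : AEDisjoint volume (RightWing α β) (LeftWing α β) :=
    measure_mono_null (fun p hp => le_antisymm (by linarith [hp.2.2]) (by linarith [hp.1.2]))
      (volume_fst_eq 0)
  have rect_disjoint : AEDisjoint volume (Rect α β) (RightWing α β ∪ LeftWing α β) :=
    AEDisjoint.union_right_iff.2
      ⟨measure_mono_null (fun p hp => le_antisymm hp.1.1.2 hp.2.2) (volume_fst_eq α),
        measure_mono_null (fun p hp => le_antisymm hp.2.2 hp.1.1.1) (volume_fst_eq (-α))⟩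
  have hW := (isCompact_rightWing (α := α) hβ).union (isCompact_leftWing (α := α) hβ)
  rw [stadium_eq_union, setIntegral_union₀ rect_disjoint hW.measurableSet.nullMeasurableSet
      (hint isCompact_rect) (hint hW), setIntegral_union₀ wings_disjoint
      (isCompact_leftWing hβ).measurableSet.nullMeasurableSet
      (hint (isCompact_rightWing hβ)) (hint (isCompact_leftWing hβ)), add_assoc]

theorem continuous_normalFlux (hF : Continuous F) (hG : Continuous G) :
    Continuous fun q : _ × _ => normalFlux F G q.1 q.2 := by
  unfold normalFlux
  fun_prop

theorem setIntegral_divergence_stadium (hα : 0 ≤ α) (hβ : 0 ≤ β) (hF : ContDiff ℝ 1 F)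
    (hG : ContDiff ℝ 1 G) :
    ∫ p in Stadium α β, divergence F G p = bdryInt α β (normalFlux F G) := by
  have hflat (x : ℝ) : normalFlux F G (x, β) (0, 1) + normalFlux F G (x, -β) (0, -1)
      = G (x, β) - G (x, -β) := by simp [normalFlux, sub_eq_add_neg]
  rw [setIntegral_stadium hα hβ (continuous_divergence hF hG),
    setIntegral_divergence_rect hα hβ hF hG, setIntegral_divergence_rightWing hβ hF hG,
    setIntegral_divergence_leftWing hβ hF hG,
    bdryInt_eq_add (continuous_normalFlux hF.continuous hG.continuous)]
  simp only [hflat]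
  ring

end DivergenceTheorem

section OutwardNormal

variable {α β : ℝ} {p n : ℝ × ℝ}

/-- `IsOutwardNormal α β p n` says that `n` is the outward unit normal of the stadium at its
boundary point `p`. The four junctions of segments and semicircles, which no boundary integral
sees, are left out. -/
inductive IsOutwardNormal (α β : ℝ) : ℝ × ℝ → ℝ × ℝ → Prop
  | top {x : ℝ} (hx : x ∈ Ioo (-α) α) : IsOutwardNormal α β (x, β) (0, 1)
  | bottom {x : ℝ} (hx : x ∈ Ioo (-α) α) : IsOutwardNormal α β (x, -β) (0, -1)
  | right {θ : ℝ} (hθ : θ ∈ Ioo (-(π / 2)) (π / 2)) :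
      IsOutwardNormal α β (α + β * cos θ, β * sin θ) (cos θ, sin θ)
  | left {θ : ℝ} (hθ : θ ∈ Ioo (-(π / 2)) (π / 2)) :
      IsOutwardNormal α β (-(α + β * cos θ), β * sin θ) (-cos θ, sin θ)

namespace IsOutwardNormal

theorem sq_add_sq (h : IsOutwardNormal α β p n) : n.1 ^ 2 + n.2 ^ 2 = 1 := by
  cases h <;> simp

theorem le_dilation (hα : 0 ≤ α) (h : IsOutwardNormal α β p n) :
    β ≤ p.1 * n.1 + p.2 * n.2 := by
  cases h with
  | top hx | bottom hx => simp
  | @right θ hθ | @left θ hθ =>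
    have hcos := cos_nonneg_of_mem_Icc (Ioo_subset_Icc_self hθ)
    linear_combination mul_nonneg hα hcos - β * sin_sq_add_cos_sq θ

theorem eq_of_fst_pos (h : IsOutwardNormal α β p n) (hn : 0 < n.1) :
    p = (α + β * n.1, β * n.2) := by
  cases h with
  | top hx | bottom hx => simp at hn
  | right hθ => rfl
  | left hθ => linarith [cos_nonneg_of_mem_Icc (Ioo_subset_Icc_self hθ)]

theorem mem_stadiumBoundary (hα : 0 ≤ α) (hβ : 0 ≤ β) (h : IsOutwardNormal α β p n) :
    p ∈ StadiumBoundary α β := by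
  cases h with
  | top hx | bottom hx => exact Or.inl ⟨(abs_lt.2 hx).le, by simp⟩
  | @right θ hθ | @left θ hθ =>
    have hcos := mul_nonneg hβ (cos_nonneg_of_mem_Icc (Ioo_subset_Icc_self hθ))
    refine Or.inr ⟨?_, ?_⟩ <;> simp only [abs_neg, abs_of_nonneg (add_nonneg hα hcos)]
    · linear_combination β ^ 2 * sin_sq_add_cos_sq θ
    · linarith

theorem abs_fst_le (hα : 0 ≤ α) (hβ : 0 ≤ β) (h : IsOutwardNormal α β p n) : |p.1| ≤ α + β :=
  (abs_le_of_mem_stadium hα hβ (stadiumBoundary_subset hβ (h.mem_stadiumBoundary hα hβ))).1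

theorem tangential_deriv_eq_zero {u : ℝ × ℝ → ℝ} (hα : 0 ≤ α) (hβ : 0 < β)
    (hu : Differentiable ℝ u) (hu0 : ∀ q ∈ StadiumBoundary α β, u q = 0)
    (h : IsOutwardNormal α β p n) : -n.2 * pdx u p + n.1 * pdy u p = 0 := by
  have deriv_zero {φ : ℝ → ℝ} {a b t m : ℝ} (ht : t ∈ Ioo a b) (hφ : HasDerivAt φ m t)
      (h0 : ∀ s ∈ Ioo a b, φ s = 0) : m = 0 :=
    (hφ.congr_of_eventuallyEq (f₁ := fun _ => 0) <|
      (isOpen_Ioo.eventually_mem ht).mono fun s hs => (h0 s hs).symm).unique (hasDerivAt_const t 0)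
  cases h with
  | @top x hx =>
    have := deriv_zero hx (hasDerivAt_pdx hu (x, β)) fun s hs =>
      hu0 _ ((top hs).mem_stadiumBoundary hα hβ.le)
    simp [this]
  | @bottom x hx =>
    have := deriv_zero hx (hasDerivAt_pdx hu (x, -β)) fun s hs =>
      hu0 _ ((bottom hs).mem_stadiumBoundary hα hβ.le)
    simp [this]
  | @right θ hθ =>
    have := deriv_zero hθ (hasDerivAt_curve hu
        (((Real.hasDerivAt_cos θ).const_mul β).const_add α) ((Real.hasDerivAt_sin θ).const_mul β))
      fun s hs => hu0 _ ((right hs).mem_stadiumBoundary hα hβ.le)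
    exact mul_left_cancel₀ hβ.ne' (by linear_combination this)
  | @left θ hθ =>
    have := deriv_zero hθ (hasDerivAt_curve hu
        (((Real.hasDerivAt_cos θ).const_mul β).const_add α).fun_neg
        ((Real.hasDerivAt_sin θ).const_mul β))
      fun s hs => hu0 _ ((left hs).mem_stadiumBoundary hα hβ.le)
    exact mul_left_cancel₀ hβ.ne' (by linear_combination -this)

theorem pdx_eq_and_pdy_eq {u : ℝ × ℝ → ℝ} (hα : 0 ≤ α) (hβ : 0 < β) (hu : Differentiable ℝ u)
    (hu0 : ∀ q ∈ StadiumBoundary α β, u q = 0) (h : IsOutwardNormal α β p n) :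
    pdx u p = n.1 * nderiv u p n ∧ pdy u p = n.2 * nderiv u p n := by
  have tangential := h.tangential_deriv_eq_zero hα hβ hu hu0
  have unit := h.sq_add_sq
  unfold nderiv
  constructor
  · linear_combination -n.2 * tangential - pdx u p * unit
  · linear_combination n.1 * tangential - pdy u p * unit

end IsOutwardNormal

variable {g h : ℝ × ℝ → ℝ × ℝ → ℝ}

theorem continuous_arc (hg : Continuous fun q : _ × _ => g q.1 q.2) :
    Continuous fun θ => g (α + β * cos θ, β * sin θ) (cos θ, sin θ) :=
  hg.comp (f := fun θ => ((α + β * cos θ, β * sin θ), (cos θ, sin θ))) (by fun_prop)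

theorem rightArcInt_mono (hβ : 0 ≤ β) (hg : Continuous fun q : _ × _ => g q.1 q.2)
    (hh : Continuous fun q : _ × _ => h q.1 q.2)
    (hle : ∀ p n, IsOutwardNormal α β p n → 0 < n.1 → g p n ≤ h p n) :
    rightArcInt α β g ≤ rightArcInt α β h :=
  mul_le_mul_of_nonneg_left
    (intervalIntegral.integral_mono_on_of_le_Ioo (by linarith [pi_pos])
      ((continuous_arc hg).intervalIntegrable _ _) ((continuous_arc hh).intervalIntegrable _ _)
      fun _ hθ => hle _ _ (.right hθ) (cos_pos_of_mem_Ioo hθ)) hβ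

theorem bdryInt_le_rightArcInt (hα : 0 ≤ α) (hβ : 0 ≤ β)
    (hg : Continuous fun q : _ × _ => g q.1 q.2) (hh : Continuous fun q : _ × _ => h q.1 q.2)
    (hnonpos : ∀ p n, IsOutwardNormal α β p n → n.1 ≤ 0 → g p n ≤ 0)
    (hle : ∀ p n, IsOutwardNormal α β p n → 0 < n.1 → g p n ≤ h p n) :
    bdryInt α β g ≤ rightArcInt α β h := by
  have hflat : ∫ x in (-α)..α, (g (x, β) (0, 1) + g (x, -β) (0, -1)) ≤ ∫ _ in (-α)..α, (0 : ℝ) := by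
    refine intervalIntegral.integral_mono_on_of_le_Ioo (neg_le_self hα) ?_ (by simp) fun x hx =>
      add_nonpos (hnonpos _ _ (.top hx) le_rfl) (hnonpos _ _ (.bottom hx) le_rfl)
    exact Continuous.intervalIntegrable
      ((hg.comp (f := fun x => ((x, β), (0, 1))) (by fun_prop)).add
        (hg.comp (f := fun x => ((x, -β), (0, -1))) (by fun_prop))) _ _
  have hleft : ∫ θ in (-(π / 2))..(π / 2), g (-(α + β * cos θ), β * sin θ) (-cos θ, sin θ)
      ≤ ∫ _ in (-(π / 2))..(π / 2), (0 : ℝ) := by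
    refine intervalIntegral.integral_mono_on_of_le_Ioo (by linarith [pi_pos]) ?_ (by simp)
      fun θ hθ => hnonpos _ _ (.left hθ) (neg_nonpos.2 (cos_pos_of_mem_Ioo hθ).le)
    exact Continuous.intervalIntegrable (hg.comp
      (f := fun θ => ((-(α + β * cos θ), β * sin θ), (-cos θ, sin θ))) (by fun_prop)) _ _
  rw [intervalIntegral.integral_zero] at hflat hleft
  rw [bdryInt_eq_add hg]
  have hleftArc : rightArcInt α β (fun p n => g (-p.1, p.2) (-n.1, n.2)) ≤ 0 :=
    mul_nonpos_of_nonneg_of_nonpos hβ hleft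
  linarith [rightArcInt_mono hβ hg hh hle]

end OutwardNormal

section L2Norm

variable {X : Type*} [MeasureSpace X] {Ω Ω' : Set X} {f g : X → ℝ}

/-- The `L²` norm of `g` over the set `Ω`. -/
def l2Norm (Ω : Set X) (g : X → ℝ) : ℝ := √(∫ x in Ω, g x ^ 2)

theorem l2Norm_nonneg (Ω : Set X) (g : X → ℝ) : 0 ≤ l2Norm Ω g := sqrt_nonneg _

theorem sq_l2Norm : l2Norm Ω g ^ 2 = ∫ x in Ω, g x ^ 2 :=
  sq_sqrt (integral_nonneg fun _ => sq_nonneg _)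

theorem l2Norm_congr (hΩ : MeasurableSet Ω) (h : EqOn f g Ω) : l2Norm Ω f = l2Norm Ω g :=
  congrArg sqrt (setIntegral_congr_fun hΩ fun _ hx => congrArg (· ^ 2) (h hx))

theorem l2Norm_mono_set (hsub : Ω' ⊆ Ω) (hg : IntegrableOn (fun x => g x ^ 2) Ω) :
    l2Norm Ω' g ≤ l2Norm Ω g :=
  sqrt_le_sqrt <| setIntegral_mono_set hg (ae_of_all _ fun _ => sq_nonneg _) hsub.eventuallyLE

theorem l2Norm_le_mul_sqrt {h : X → ℝ} {c : ℝ} (hΩ : MeasurableSet Ω) (hc : 0 ≤ c)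
    (hh : IntegrableOn h Ω) (hle : ∀ x ∈ Ω, g x ^ 2 ≤ c ^ 2 * h x) :
    l2Norm Ω g ≤ c * √(∫ x in Ω, h x) := by
  rw [← sqrt_sq hc, ← sqrt_mul (sq_nonneg c), ← integral_const_mul]
  exact sqrt_le_sqrt <| integral_mono_of_nonneg (ae_of_all _ fun _ => sq_nonneg _)
    (hh.const_mul _) ((ae_restrict_iff' hΩ).2 (ae_of_all _ hle))

end L2Norm

section CompactDomain

variable {X : Type*} [TopologicalSpace X] [T2Space X] [MeasureSpace X] [OpensMeasurableSpace X]
  [IsFiniteMeasureOnCompacts (volume : Measure X)] {Ω : Set X} {f g h : X → ℝ} {c : ℝ}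

theorem memLp_two_of_continuous (hΩ : IsCompact Ω) (hg : Continuous g) :
    MemLp g 2 (volume.restrict Ω) :=
  (memLp_two_iff_integrable_sq
    (hg.continuousOn.aestronglyMeasurable_of_isCompact hΩ hΩ.measurableSet)).2
    (integrableOn_of_continuous hΩ (hg.pow 2))

theorem abs_setIntegral_mul_le (hΩ : IsCompact Ω) (hf : Continuous f) (hg : Continuous g) :
    |∫ x in Ω, f x * g x| ≤ l2Norm Ω f * l2Norm Ω g := by
  have holder := integral_mul_norm_le_Lp_mul_Lq Real.HolderConjugate.two_two
    (by simpa using memLp_two_of_continuous hΩ hf) (by simpa using memLp_two_of_continuous hΩ hg)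
  simp only [norm_eq_abs, rpow_two, sq_abs, ← sqrt_eq_rpow] at holder
  refine (abs_integral_le_integral_abs).trans ?_
  simpa only [abs_mul, l2Norm] using holder

theorem abs_setIntegral_mul_le_mul_sqrt (hΩ : IsCompact Ω) (hf : Continuous f)
    (hg : Continuous g) (hh : Continuous h) (hc : 0 ≤ c)
    (hle : ∀ x ∈ Ω, g x ^ 2 ≤ c ^ 2 * h x) :
    |∫ x in Ω, f x * g x| ≤ l2Norm Ω f * (c * √(∫ x in Ω, h x)) :=
  (abs_setIntegral_mul_le hΩ hf hg).trans <| mul_le_mul_of_nonneg_left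
    (l2Norm_le_mul_sqrt hΩ.measurableSet hc (integrableOn_of_continuous hΩ hh) hle)
    (l2Norm_nonneg Ω f)

end CompactDomain

section DivergenceIdentities

variable {u X Y φ : ℝ × ℝ → ℝ}

/-- The squared length of the gradient of `u`. -/
def gradSq (u : ℝ × ℝ → ℝ) (p : ℝ × ℝ) : ℝ := pdx u p ^ 2 + pdy u p ^ 2

/-- The Helmholtz operator `Δ - lam²` applied to `u`. -/
def helmholtz (lam : ℝ) (u : ℝ × ℝ → ℝ) (p : ℝ × ℝ) : ℝ := lap u p - lam ^ 2 * u p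

/-- The derivative of `u` along the vector field with components `X` and `Y`. -/
def derivAlong (X Y u : ℝ × ℝ → ℝ) (p : ℝ × ℝ) : ℝ := X p * pdx u p + Y p * pdy u p

/-- First component of the Rellich–Pohozaev field of `u` with multiplier field `(X, Y)`, namely
`2 ((X, Y) · ∇u) ∇u - (|∇u|² - lam² u²) (X, Y)`. -/
def rellichX (lam : ℝ) (u X Y : ℝ × ℝ → ℝ) (p : ℝ × ℝ) : ℝ :=
  2 * derivAlong X Y u p * pdx u p - (gradSq u p - lam ^ 2 * u p ^ 2) * X p

/-- Second component of the Rellich–Pohozaev field, see `rellichX`. -/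
def rellichY (lam : ℝ) (u X Y : ℝ × ℝ → ℝ) (p : ℝ × ℝ) : ℝ :=
  2 * derivAlong X Y u p * pdy u p - (gradSq u p - lam ^ 2 * u p ^ 2) * Y p

theorem divergence_rellich (lam : ℝ) (hu : ContDiff ℝ 2 u) (hX : Differentiable ℝ X)
    (hY : Differentiable ℝ Y) (p : ℝ × ℝ) :
    divergence (rellichX lam u X Y) (rellichY lam u X Y) p
      = 2 * (pdx X p * pdx u p ^ 2 + (pdy X p + pdx Y p) * (pdx u p * pdy u p)
          + pdy Y p * pdy u p ^ 2)
        - divergence X Y p * (gradSq u p - lam ^ 2 * u p ^ 2)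
        - 2 * (helmholtz lam u p * derivAlong X Y u p) := by
  have du : Differentiable ℝ u := hu.differentiable two_ne_zero
  have dux : Differentiable ℝ (pdx u) :=
    (contDiff_pdx hu one_add_one_eq_two.le).differentiable one_ne_zero
  have duy : Differentiable ℝ (pdy u) :=
    (contDiff_pdy hu one_add_one_eq_two.le).differentiable one_ne_zero
  have hx : HasDerivAt (fun t => rellichX lam u X Y (t, p.2)) _ p.1 :=
    (((((hasDerivAt_pdx hX p).mul (hasDerivAt_pdx dux p)).add
      ((hasDerivAt_pdx hY p).mul (hasDerivAt_pdx duy p))).const_mul 2).mul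
        (hasDerivAt_pdx dux p)).sub
      (((((hasDerivAt_pdx dux p).pow 2).add ((hasDerivAt_pdx duy p).pow 2)).sub
        (((hasDerivAt_pdx du p).pow 2).const_mul (lam ^ 2))).mul (hasDerivAt_pdx hX p))
  have hy : HasDerivAt (fun t => rellichY lam u X Y (p.1, t)) _ p.2 :=
    (((((hasDerivAt_pdy hX p).mul (hasDerivAt_pdy dux p)).add
      ((hasDerivAt_pdy hY p).mul (hasDerivAt_pdy duy p))).const_mul 2).mul
        (hasDerivAt_pdy duy p)).sub
      (((((hasDerivAt_pdy dux p).pow 2).add ((hasDerivAt_pdy duy p).pow 2)).sub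
        (((hasDerivAt_pdy du p).pow 2).const_mul (lam ^ 2))).mul (hasDerivAt_pdy hY p))
  have mixed : pdx (pdy u) p = pdy (pdx u) p := congrFun (pdx_pdy_comm hu) p
  rw [divergence, pdx, pdy, hx.deriv, hy.deriv, mixed]
  simp only [divergence, gradSq, helmholtz, lap, derivAlong, Pi.add_apply, Pi.mul_apply,
    Pi.sub_apply, Pi.pow_apply]
  ring

theorem divergence_mul_mul_grad (hu : ContDiff ℝ 2 u) (hφ : Differentiable ℝ φ) (p : ℝ × ℝ) :
    divergence (fun q => φ q * u q * pdx u q) (fun q => φ q * u q * pdy u q) p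
      = φ p * gradSq u p + u p * derivAlong (pdx φ) (pdy φ) u p - φ p * u p * lap u p := by
  have du : Differentiable ℝ u := hu.differentiable two_ne_zero
  have dux : Differentiable ℝ (pdx u) :=
    (contDiff_pdx hu one_add_one_eq_two.le).differentiable one_ne_zero
  have duy : Differentiable ℝ (pdy u) :=
    (contDiff_pdy hu one_add_one_eq_two.le).differentiable one_ne_zero
  have hx : HasDerivAt (fun t => φ (t, p.2) * u (t, p.2) * pdx u (t, p.2)) _ p.1 :=
    ((hasDerivAt_pdx hφ p).fun_mul (hasDerivAt_pdx du p)).fun_mul (hasDerivAt_pdx dux p)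
  have hy : HasDerivAt (fun t => φ (p.1, t) * u (p.1, t) * pdy u (p.1, t)) _ p.2 :=
    ((hasDerivAt_pdy hφ p).fun_mul (hasDerivAt_pdy du p)).fun_mul (hasDerivAt_pdy duy p)
  rw [divergence, pdx, pdy, hx.deriv, hy.deriv]
  simp only [gradSq, lap, derivAlong]
  ring

end DivergenceIdentities

section BoundaryFlux

variable {α β lam : ℝ} {u X Y F G : ℝ × ℝ → ℝ} {p n : ℝ × ℝ}

theorem contDiff_rellichX (hu : ContDiff ℝ 2 u) (hX : ContDiff ℝ 1 X) (hY : ContDiff ℝ 1 Y) :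
    ContDiff ℝ 1 (rellichX lam u X Y) := by
  have hu1 : ContDiff ℝ 1 u := hu.of_le one_le_two
  have hux : ContDiff ℝ 1 (pdx u) := contDiff_pdx hu one_add_one_eq_two.le
  have huy : ContDiff ℝ 1 (pdy u) := contDiff_pdy hu one_add_one_eq_two.le
  unfold rellichX derivAlong gradSq
  fun_prop

theorem contDiff_rellichY (hu : ContDiff ℝ 2 u) (hX : ContDiff ℝ 1 X) (hY : ContDiff ℝ 1 Y) :
    ContDiff ℝ 1 (rellichY lam u X Y) := by
  have hu1 : ContDiff ℝ 1 u := hu.of_le one_le_two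
  have hux : ContDiff ℝ 1 (pdx u) := contDiff_pdx hu one_add_one_eq_two.le
  have huy : ContDiff ℝ 1 (pdy u) := contDiff_pdy hu one_add_one_eq_two.le
  unfold rellichY derivAlong gradSq
  fun_prop

theorem continuous_nderiv (hu : ContDiff ℝ 1 u) :
    Continuous fun q : _ × _ => nderiv u q.1 q.2 :=
  continuous_normalFlux (contDiff_pdx hu (zero_add 1).le).continuous
    (contDiff_pdy hu (zero_add 1).le).continuous

theorem rightArcInt_add_smul {g h : ℝ × ℝ → ℝ × ℝ → ℝ} (a b : ℝ)
    (hg : Continuous fun q : _ × _ => g q.1 q.2) (hh : Continuous fun q : _ × _ => h q.1 q.2) :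
    rightArcInt α β (fun p n => a * g p n + b * h p n)
      = a * rightArcInt α β g + b * rightArcInt α β h := by
  simp only [rightArcInt]
  rw [intervalIntegral.integral_add (((continuous_arc hg).const_mul a).intervalIntegrable _ _)
      (((continuous_arc hh).const_mul b).intervalIntegrable _ _),
    intervalIntegral.integral_const_mul, intervalIntegral.integral_const_mul]
  ring

theorem rightArcInt_const_mul (a : ℝ) (g : ℝ × ℝ → ℝ × ℝ → ℝ) :
    rightArcInt α β (fun p n => a * g p n) = a * rightArcInt α β g := by
  simp only [rightArcInt, intervalIntegral.integral_const_mul]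
  ring

theorem rightArcInt_zero : rightArcInt α β (fun _ _ => 0) = 0 := by
  simp [rightArcInt]

theorem setIntegral_divergence_stadium_nonpos (hα : 0 ≤ α) (hβ : 0 ≤ β) (hF : ContDiff ℝ 1 F)
    (hG : ContDiff ℝ 1 G)
    (hflux : ∀ p n, IsOutwardNormal α β p n → normalFlux F G p n ≤ 0) :
    ∫ p in Stadium α β, divergence F G p ≤ 0 := by
  rw [setIntegral_divergence_stadium hα hβ hF hG, ← rightArcInt_zero (α := α) (β := β)]
  exact bdryInt_le_rightArcInt hα hβ (continuous_normalFlux hF.continuous hG.continuous)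
    continuous_const (fun p n h _ => hflux p n h) (fun p n h _ => hflux p n h)

theorem setIntegral_divergence_rightWing_nonpos (hβ : 0 ≤ β) (hF : ContDiff ℝ 1 F)
    (hG : ContDiff ℝ 1 G) (hside : ∀ y, F (α, y) = 0)
    (hflux : ∀ p n, IsOutwardNormal α β p n → normalFlux F G p n ≤ 0) :
    ∫ p in RightWing α β, divergence F G p ≤ 0 := by
  rw [setIntegral_divergence_rightWing hβ hF hG, ← rightArcInt_zero (α := α) (β := β)]
  simp only [hside, intervalIntegral.integral_zero, sub_zero]
  exact rightArcInt_mono hβ (continuous_normalFlux hF.continuous hG.continuous)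
    continuous_const (fun p n h _ => hflux p n h)

theorem normalFlux_rellich (hα : 0 ≤ α) (hβ : 0 < β) (hu : Differentiable ℝ u)
    (hu0 : ∀ q ∈ StadiumBoundary α β, u q = 0) (h : IsOutwardNormal α β p n) :
    normalFlux (rellichX lam u X Y) (rellichY lam u X Y) p n
      = normalFlux X Y p n * nderiv u p n ^ 2 := by
  obtain ⟨hx, hy⟩ := h.pdx_eq_and_pdy_eq hα hβ hu hu0
  simp only [normalFlux, rellichX, rellichY, derivAlong, gradSq, hx, hy,
    hu0 p (h.mem_stadiumBoundary hα hβ.le)]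
  linear_combination (n.1 * X p + n.2 * Y p) * nderiv u p n ^ 2 * h.sq_add_sq

theorem setIntegral_divergence_rellich_stadium_le {c : ℝ × ℝ → ℝ × ℝ → ℝ} (hα : 0 ≤ α)
    (hβ : 0 < β) (hu : ContDiff ℝ 2 u) (hu0 : ∀ q ∈ StadiumBoundary α β, u q = 0)
    (hX : ContDiff ℝ 1 X) (hY : ContDiff ℝ 1 Y) (hc : Continuous fun q : _ × _ => c q.1 q.2)
    (hnonpos : ∀ p n, IsOutwardNormal α β p n → n.1 ≤ 0 → normalFlux X Y p n ≤ 0)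
    (hle : ∀ p n, IsOutwardNormal α β p n → 0 < n.1 → normalFlux X Y p n ≤ c p n) :
    ∫ p in Stadium α β, divergence (rellichX lam u X Y) (rellichY lam u X Y) p
      ≤ rightArcInt α β fun p n => c p n * nderiv u p n ^ 2 := by
  have hF := contDiff_rellichX (lam := lam) hu hX hY
  have hG := contDiff_rellichY (lam := lam) hu hX hY
  have hflux {p n} (h : IsOutwardNormal α β p n) :=
    normalFlux_rellich (lam := lam) (X := X) (Y := Y) hα hβ (hu.differentiable two_ne_zero) hu0 h
  rw [setIntegral_divergence_stadium hα hβ.le hF hG]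
  refine bdryInt_le_rightArcInt hα hβ.le (continuous_normalFlux hF.continuous hG.continuous)
    (hc.mul ((continuous_nderiv (hu.of_le one_le_two)).pow 2)) (fun p n h hn => ?_)
    (fun p n h hn => ?_) <;> rw [hflux h]
  · exact mul_nonpos_of_nonpos_of_nonneg (hnonpos p n h hn) (sq_nonneg _)
  · exact mul_le_mul_of_nonneg_right (hle p n h hn) (sq_nonneg _)

theorem rightArcInt_le_setIntegral_divergence_rellich {c : ℝ × ℝ → ℝ × ℝ → ℝ} (hα : 0 ≤ α)
    (hβ : 0 < β) (hu : ContDiff ℝ 2 u) (hu0 : ∀ q ∈ StadiumBoundary α β, u q = 0)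
    (hX : ContDiff ℝ 1 X) (hY : ContDiff ℝ 1 Y) (hc : Continuous fun q : _ × _ => c q.1 q.2)
    (hX0 : ∀ y, X (α, y) = 0) (hY0 : ∀ y, Y (α, y) = 0)
    (hle : ∀ p n, IsOutwardNormal α β p n → 0 < n.1 → c p n ≤ normalFlux X Y p n) :
    rightArcInt α β (fun p n => c p n * nderiv u p n ^ 2)
      ≤ ∫ p in RightWing α β, divergence (rellichX lam u X Y) (rellichY lam u X Y) p := by
  have hF := contDiff_rellichX (lam := lam) hu hX hY
  have hG := contDiff_rellichY (lam := lam) hu hX hY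
  have hside (y : ℝ) : rellichX lam u X Y (α, y) = 0 := by
    simp [rellichX, derivAlong, hX0, hY0]
  rw [setIntegral_divergence_rightWing hβ.le hF hG]
  simp only [hside, intervalIntegral.integral_zero, sub_zero]
  refine rightArcInt_mono hβ.le (hc.mul ((continuous_nderiv (hu.of_le one_le_two)).pow 2))
    (continuous_normalFlux hF.continuous hG.continuous) fun p n h hn => ?_
  rw [normalFlux_rellich hα hβ (hu.differentiable two_ne_zero) hu0 h]
  exact mul_le_mul_of_nonneg_right (hle p n h hn) (sq_nonneg _)

theorem two_mul_rightArcInt_le {ε : ℝ} (hβ : 0 ≤ β) (hu : ContDiff ℝ 1 u) (hε : 0 < ε) :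
    2 * rightArcInt α β (fun p n => n.1 * nderiv u p n ^ 2)
      ≤ ε * rightArcInt α β (fun p n => nderiv u p n ^ 2)
        + ε⁻¹ * rightArcInt α β (fun p n => n.1 ^ 2 * nderiv u p n ^ 2) := by
  have hd := continuous_nderiv hu
  rw [← rightArcInt_const_mul, ← rightArcInt_add_smul _ _ (by fun_prop) (by fun_prop)]
  refine rightArcInt_mono hβ (by fun_prop) (by fun_prop) fun p n _ _ => ?_
  have amgm : 2 * n.1 ≤ ε + ε⁻¹ * n.1 ^ 2 := by
    have : ε + ε⁻¹ * n.1 ^ 2 - 2 * n.1 = ε⁻¹ * (n.1 - ε) ^ 2 := by field_simp; ring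
    linarith [mul_nonneg (inv_nonneg.2 hε.le) (sq_nonneg (n.1 - ε))]
  linarith [mul_le_mul_of_nonneg_right amgm (sq_nonneg (nderiv u p n))]

end BoundaryFlux

section Estimates

variable {α β lam : ℝ} {u φ : ℝ × ℝ → ℝ} {Ω : Set (ℝ × ℝ)}

theorem continuous_gradSq (hu : ContDiff ℝ 1 u) : Continuous (gradSq u) :=
  ((contDiff_pdx hu (zero_add 1).le).continuous.pow 2).add
    ((contDiff_pdy hu (zero_add 1).le).continuous.pow 2)

theorem continuous_helmholtz (hu : ContDiff ℝ 2 u) : Continuous (helmholtz lam u) :=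
  (((contDiff_pdx (contDiff_pdx hu one_add_one_eq_two.le) (zero_add 1).le).continuous.neg).sub
    (contDiff_pdy (contDiff_pdy hu one_add_one_eq_two.le) (zero_add 1).le).continuous).sub
    (continuous_const.mul hu.continuous)

theorem continuous_derivAlong {X Y : ℝ × ℝ → ℝ} (hX : Continuous X) (hY : Continuous Y)
    (hu : ContDiff ℝ 1 u) : Continuous (derivAlong X Y u) :=
  (hX.mul (contDiff_pdx hu (zero_add 1).le).continuous).add
    (hY.mul (contDiff_pdy hu (zero_add 1).le).continuous)

theorem sq_derivAlong_le (X Y : ℝ × ℝ → ℝ) (p : ℝ × ℝ) :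
    derivAlong X Y u p ^ 2 ≤ (X p ^ 2 + Y p ^ 2) * gradSq u p := by
  unfold derivAlong gradSq
  linear_combination sq_nonneg (X p * pdy u p - Y p * pdx u p)

theorem gradSq_nonneg (p : ℝ × ℝ) : 0 ≤ gradSq u p := add_nonneg (sq_nonneg _) (sq_nonneg _)

theorem setIntegral_mul_gradSq (hΩ : IsCompact Ω) (hu : ContDiff ℝ 2 u) (hφ : ContDiff ℝ 1 φ) :
    ∫ p in Ω, φ p * gradSq u p
      = (∫ p in Ω, divergence (fun q => φ q * u q * pdx u q) (fun q => φ q * u q * pdy u q) p)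
        + lam ^ 2 * (∫ p in Ω, φ p * u p ^ 2) + (∫ p in Ω, u p * (φ p * helmholtz lam u p))
        - ∫ p in Ω, u p * derivAlong (pdx φ) (pdy φ) u p := by
  have hu1 : ContDiff ℝ 1 u := hu.of_le one_le_two
  have hux : ContDiff ℝ 1 (pdx u) := contDiff_pdx hu one_add_one_eq_two.le
  have huy : ContDiff ℝ 1 (pdy u) := contDiff_pdy hu one_add_one_eq_two.le
  have : Continuous (gradSq u) := continuous_gradSq hu1
  have hh : Continuous (helmholtz lam u) := continuous_helmholtz hu
  have hdiv := continuous_divergence ((hφ.mul hu1).mul hux) ((hφ.mul hu1).mul huy)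
  have hφu : Continuous (derivAlong (pdx φ) (pdy φ) u) :=
    continuous_derivAlong (contDiff_pdx hφ (zero_add 1).le).continuous
      (contDiff_pdy hφ (zero_add 1).le).continuous hu1
  rw [← integral_const_mul, ← integral_add, ← integral_add, ← integral_sub]
  · refine setIntegral_congr_fun hΩ.measurableSet fun p _ => ?_
    simp only [divergence_mul_mul_grad hu (hφ.differentiable one_ne_zero), helmholtz]
    ring
  all_goals exact integrableOn_of_continuous hΩ (by fun_prop)

theorem normalFlux_mul_mul_grad {p n : ℝ × ℝ} (hα : 0 ≤ α) (hβ : 0 ≤ β)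
    (hu0 : ∀ q ∈ StadiumBoundary α β, u q = 0) (h : IsOutwardNormal α β p n) :
    normalFlux (fun q => φ q * u q * pdx u q) (fun q => φ q * u q * pdy u q) p n = 0 := by
  simp [normalFlux, hu0 p (h.mem_stadiumBoundary hα hβ)]

theorem l2Norm_rightWing_le {g : ℝ × ℝ → ℝ} (hβ : 0 ≤ β) (hg : Continuous g) :
    l2Norm (RightWing α β) g ≤ l2Norm (Stadium α β) g :=
  l2Norm_mono_set (rightWing_subset_wings.trans wings_subset_stadium)
    (integrableOn_of_continuous (isCompact_stadium hβ) (hg.pow 2))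

theorem divergence_fst_mul_sq (hu : Differentiable ℝ u) (p : ℝ × ℝ) :
    divergence (fun q => q.1 * u q ^ 2) (fun _ => 0) p
      = u p ^ 2 + 2 * (u p * (p.1 * pdx u p)) := by
  have hx : HasDerivAt (fun t => t * u (t, p.2) ^ 2) _ p.1 :=
    (hasDerivAt_id' p.1).fun_mul ((hasDerivAt_pdx hu p).fun_pow 2)
  rw [divergence, pdx, pdy, hx.deriv, deriv_const]
  ring

theorem l2Norm_le_l2Norm_pdx (hα : 0 ≤ α) (hβ : 0 ≤ β) (hu : ContDiff ℝ 1 u)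
    (hu0 : ∀ q ∈ StadiumBoundary α β, u q = 0) :
    l2Norm (Stadium α β) u ≤ 2 * (α + β) * l2Norm (Stadium α β) (pdx u) := by
  have hS := isCompact_stadium (α := α) hβ
  have cu : Continuous u := hu.continuous
  have cux : Continuous (pdx u) := (contDiff_pdx hu (zero_add 1).le).continuous
  have hflux := setIntegral_divergence_stadium_nonpos (F := fun q => q.1 * u q ^ 2)
    (G := fun _ => 0) hα hβ (contDiff_fst.mul (hu.pow 2)) contDiff_const fun p n h => by
      simp [normalFlux, hu0 p (h.mem_stadiumBoundary hα hβ)]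
  simp only [divergence_fst_mul_sq (hu.differentiable one_ne_zero)] at hflux
  rw [integral_add (integrableOn_of_continuous hS (by fun_prop))
    (integrableOn_of_continuous hS (by fun_prop)), integral_const_mul, ← sq_l2Norm] at hflux
  have cauchy : |∫ p in Stadium α β, u p * (p.1 * pdx u p)|
      ≤ l2Norm (Stadium α β) u * ((α + β) * l2Norm (Stadium α β) (pdx u)) :=
    abs_setIntegral_mul_le_mul_sqrt hS cu (by fun_prop) (cux.pow 2) (add_nonneg hα hβ)
      fun p hp => by
        rw [mul_pow]
        exact mul_le_mul_of_nonneg_right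
          (sq_le_sq.2 ((abs_le_of_mem_stadium hα hβ hp).1.trans (le_abs_self _))) (sq_nonneg _)
  have hsq : l2Norm (Stadium α β) u * l2Norm (Stadium α β) u
      ≤ l2Norm (Stadium α β) u * (2 * (α + β) * l2Norm (Stadium α β) (pdx u)) := by
    linarith [neg_abs_le (∫ p in Stadium α β, u p * (p.1 * pdx u p))]
  rcases (l2Norm_nonneg (Stadium α β) u).eq_or_lt with hzero | hpos
  · rw [← hzero]
    exact mul_nonneg (by positivity) (l2Norm_nonneg _ _)
  · exact le_of_mul_le_mul_left hsq hpos

theorem setIntegral_gradSq_le (hα : 0 ≤ α) (hβ : 0 ≤ β) (hu : ContDiff ℝ 2 u)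
    (hu0 : ∀ q ∈ StadiumBoundary α β, u q = 0) :
    ∫ p in Stadium α β, gradSq u p ≤ lam ^ 2 * l2Norm (Stadium α β) u ^ 2
      + l2Norm (Stadium α β) u * l2Norm (Stadium α β) (helmholtz lam u) := by
  have hS := isCompact_stadium (α := α) hβ
  have green := setIntegral_mul_gradSq (lam := lam) (φ := fun _ => 1) hS hu contDiff_const
  have hflux := setIntegral_divergence_stadium_nonpos hα hβ
    ((contDiff_const.mul (hu.of_le one_le_two)).mul (contDiff_pdx hu one_add_one_eq_two.le))
    ((contDiff_const.mul (hu.of_le one_le_two)).mul (contDiff_pdy hu one_add_one_eq_two.le))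
    fun p n h => (normalFlux_mul_mul_grad (φ := fun _ => 1) hα hβ hu0 h).le
  have cauchy := abs_setIntegral_mul_le hS hu.continuous (continuous_helmholtz (lam := lam) hu)
  have hconst : ∀ p, derivAlong (pdx fun _ => 1) (pdy fun _ => 1) u p = 0 := fun p => by
    simp [derivAlong, pdx, pdy]
  simp only [hconst, one_mul, mul_zero, integral_zero, sub_zero, ← sq_l2Norm] at green hflux
  linarith [le_abs_self (∫ p in Stadium α β, u p * helmholtz lam u p)]

theorem divergence_rellich_horizontal (c : ℝ) (hu : ContDiff ℝ 2 u) (p : ℝ × ℝ) :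
    divergence (rellichX lam u (fun q => q.1 + c) fun _ => 0)
      (rellichY lam u (fun q => q.1 + c) fun _ => 0) p
      = 2 * pdx u p ^ 2 - (gradSq u p - lam ^ 2 * u p ^ 2)
        - 2 * (helmholtz lam u p * ((p.1 + c) * pdx u p)) := by
  rw [divergence_rellich lam hu (by fun_prop) (by fun_prop)]
  simp [divergence, derivAlong, pdx, pdy]

theorem setIntegral_divergence_rellich_horizontal_le (hα : 0 ≤ α) (hβ : 0 < β)
    (hu : ContDiff ℝ 2 u) (hu0 : ∀ q ∈ StadiumBoundary α β, u q = 0) :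
    ∫ p in Stadium α β, divergence (rellichX lam u (fun q => q.1 + (α + β)) fun _ => 0)
        (rellichY lam u (fun q => q.1 + (α + β)) fun _ => 0) p
      ≤ 2 * (α + β) * rightArcInt α β fun p n => n.1 * nderiv u p n ^ 2 := by
  rw [← rightArcInt_const_mul]
  simp only [← mul_assoc (2 * (α + β))]
  exact setIntegral_divergence_rellich_stadium_le
    (X := fun q => q.1 + (α + β)) (Y := fun _ => 0) (c := fun _ n => 2 * (α + β) * n.1)
    hα hβ hu hu0 (by fun_prop) (by fun_prop) (by fun_prop)
    (fun p n h hn => by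
      have := neg_le_of_abs_le (h.abs_fst_le hα hβ.le)
      simpa [normalFlux] using mul_nonpos_of_nonpos_of_nonneg hn (by linarith))
    (fun p n h hn => by
      have := le_of_abs_le (h.abs_fst_le hα hβ.le)
      simp only [normalFlux]
      nlinarith)

theorem sq_l2Norm_pdx_le (hα : 0 ≤ α) (hβ : 0 < β) (hu : ContDiff ℝ 2 u)
    (hu0 : ∀ q ∈ StadiumBoundary α β, u q = 0) :
    l2Norm (Stadium α β) (pdx u) ^ 2
      ≤ 3 * (α + β) * (l2Norm (Stadium α β) (helmholtz lam u) * l2Norm (Stadium α β) (pdx u))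
        + (α + β) * rightArcInt α β fun p n => n.1 * nderiv u p n ^ 2 := by
  have hS := isCompact_stadium (α := α) hβ.le
  have hu1 : ContDiff ℝ 1 u := hu.of_le one_le_two
  have cu : Continuous u := hu.continuous
  have cux : Continuous (pdx u) := (contDiff_pdx hu1 (zero_add 1).le).continuous
  have cgrad : Continuous (gradSq u) := continuous_gradSq hu1
  have ch : Continuous (helmholtz lam u) := continuous_helmholtz hu
  have hint {g : ℝ × ℝ → ℝ} (hg : Continuous g) := integrableOn_of_continuous hS hg
  have hflux := setIntegral_divergence_rellich_horizontal_le (lam := lam) hα hβ hu hu0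
  simp only [divergence_rellich_horizontal _ hu] at hflux
  rw [integral_sub (hint (by fun_prop)) (hint (by fun_prop)),
    integral_sub (hint (by fun_prop)) (hint (by fun_prop)),
    integral_sub (hint (by fun_prop)) (hint (by fun_prop)), integral_const_mul,
    integral_const_mul, integral_const_mul, ← sq_l2Norm, ← sq_l2Norm] at hflux
  have cauchy : |∫ p in Stadium α β, helmholtz lam u p * ((p.1 + (α + β)) * pdx u p)|
      ≤ l2Norm (Stadium α β) (helmholtz lam u)
        * (2 * (α + β) * l2Norm (Stadium α β) (pdx u)) :=
    abs_setIntegral_mul_le_mul_sqrt hS ch (by fun_prop) (cux.pow 2) (by positivity)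
      fun p hp => by
        obtain ⟨hl, hr⟩ := abs_le.1 (abs_le_of_mem_stadium hα hβ.le hp).1
        rw [mul_pow]
        exact mul_le_mul_of_nonneg_right
          (pow_le_pow_left₀ (by linarith) (by linarith) 2) (sq_nonneg _)
  have energy := setIntegral_gradSq_le (lam := lam) hα hβ.le hu hu0
  have poincare := l2Norm_le_l2Norm_pdx hα hβ.le hu1 hu0
  have hνN := mul_le_mul_of_nonneg_left poincare
    (l2Norm_nonneg (Stadium α β) (helmholtz lam u))
  linarith [le_abs_self
    (∫ p in Stadium α β, helmholtz lam u p * ((p.1 + (α + β)) * pdx u p))]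

theorem divergence_rellich_neg_dilation (hu : ContDiff ℝ 2 u) (p : ℝ × ℝ) :
    divergence (rellichX lam u (fun q => -q.1) fun q => -q.2)
      (rellichY lam u (fun q => -q.1) fun q => -q.2) p
      = -(2 * lam ^ 2) * u p ^ 2
        - 2 * (helmholtz lam u p * derivAlong (fun q => -q.1) (fun q => -q.2) u p) := by
  rw [divergence_rellich lam hu (by fun_prop) (by fun_prop)]
  simp [divergence, pdx, pdy, gradSq]
  ring

theorem setIntegral_divergence_rellich_neg_dilation_le (hα : 0 ≤ α) (hβ : 0 < β)
    (hu : ContDiff ℝ 2 u) (hu0 : ∀ q ∈ StadiumBoundary α β, u q = 0) :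
    ∫ p in Stadium α β, divergence (rellichX lam u (fun q => -q.1) fun q => -q.2)
        (rellichY lam u (fun q => -q.1) fun q => -q.2) p
      ≤ -β * rightArcInt α β fun p n => nderiv u p n ^ 2 := by
  rw [← rightArcInt_const_mul]
  have flux_le {p n : ℝ × ℝ} (h : IsOutwardNormal α β p n) :
      normalFlux (fun q => -q.1) (fun q => -q.2) p n ≤ -β := by
    have := h.le_dilation hα
    simp only [normalFlux]
    linarith
  exact setIntegral_divergence_rellich_stadium_le
    (X := fun q => -q.1) (Y := fun q => -q.2) (c := fun _ _ => -β)
    hα hβ hu hu0 (by fun_prop) (by fun_prop) (by fun_prop)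
    (fun p n h _ => (flux_le h).trans (neg_nonpos.2 hβ.le)) (fun p n h _ => flux_le h)

theorem mul_rightArcInt_le (hα : 0 ≤ α) (hβ : 0 < β) (hu : ContDiff ℝ 2 u)
    (hu0 : ∀ q ∈ StadiumBoundary α β, u q = 0) :
    β * rightArcInt α β (fun p n => nderiv u p n ^ 2)
      ≤ 2 * lam ^ 2 * l2Norm (Stadium α β) u ^ 2
        + 4 * (α + β) * l2Norm (Stadium α β) (helmholtz lam u)
          * √(∫ p in Stadium α β, gradSq u p) := by
  have hS := isCompact_stadium (α := α) hβ.le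
  have hu1 : ContDiff ℝ 1 u := hu.of_le one_le_two
  have cu : Continuous u := hu.continuous
  have cgrad : Continuous (gradSq u) := continuous_gradSq hu1
  have ch : Continuous (helmholtz lam u) := continuous_helmholtz hu
  have cD : Continuous (derivAlong (fun q => -q.1) (fun q => -q.2) u) :=
    continuous_derivAlong (by fun_prop) (by fun_prop) hu1
  have hint {g : ℝ × ℝ → ℝ} (hg : Continuous g) := integrableOn_of_continuous hS hg
  have hflux := setIntegral_divergence_rellich_neg_dilation_le (lam := lam) hα hβ hu hu0
  simp only [divergence_rellich_neg_dilation hu] at hflux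
  rw [integral_sub (hint (by fun_prop)) (hint (by fun_prop)), integral_const_mul,
    integral_const_mul, ← sq_l2Norm] at hflux
  have cauchy : |∫ p in Stadium α β,
      helmholtz lam u p * derivAlong (fun q => -q.1) (fun q => -q.2) u p|
      ≤ l2Norm (Stadium α β) (helmholtz lam u)
        * (2 * (α + β) * √(∫ p in Stadium α β, gradSq u p)) :=
    abs_setIntegral_mul_le_mul_sqrt hS ch cD cgrad (by positivity) fun p hp => by
      obtain ⟨hx, hy⟩ := abs_le_of_mem_stadium hα hβ.le hp
      have hx2 := sq_le_sq.2 (hx.trans (le_abs_self _))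
      have hy2 := sq_le_sq.2 (hy.trans (le_abs_self _))
      refine (sq_derivAlong_le _ _ p).trans (mul_le_mul_of_nonneg_right ?_ (gradSq_nonneg p))
      nlinarith
  linarith [le_abs_self (∫ p in Stadium α β,
    helmholtz lam u p * derivAlong (fun q => -q.1) (fun q => -q.2) u p)]

end Estimates

section WingEstimates

variable {α β lam : ℝ} {u : ℝ × ℝ → ℝ} {p : ℝ × ℝ}

/-- First component of the multiplier field `s² (s, y)`, where `s = x - α` is the distance to the
flat side of `RightWing`. It is radial, hence normal to the semicircle, and vanishes on the flat
side to an order that leaves all gradient terms of the Rellich identity with a factor `s`. -/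
def wingX (α : ℝ) (p : ℝ × ℝ) : ℝ := (p.1 - α) ^ 3

/-- Second component of the multiplier field, see `wingX`. -/
def wingY (α : ℝ) (p : ℝ × ℝ) : ℝ := (p.1 - α) ^ 2 * p.2

theorem contDiff_wingX : ContDiff ℝ 1 (wingX α) := by
  unfold wingX
  fun_prop

theorem contDiff_wingY : ContDiff ℝ 1 (wingY α) := by
  unfold wingY
  fun_prop

theorem divergence_rellich_wing (hu : ContDiff ℝ 2 u) (p : ℝ × ℝ) :
    divergence (rellichX lam u (wingX α) (wingY α)) (rellichY lam u (wingX α) (wingY α)) p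
      = 2 * (p.1 - α) ^ 2 * (pdx u p ^ 2 - pdy u p ^ 2)
        + 4 * (p.1 - α) * p.2 * (pdx u p * pdy u p) + 4 * lam ^ 2 * (p.1 - α) ^ 2 * u p ^ 2
        - 2 * (helmholtz lam u p * derivAlong (wingX α) (wingY α) u p) := by
  have hXx : pdx (wingX α) p = 3 * (p.1 - α) ^ 2 := by simp [pdx, wingX]
  have hXy : pdy (wingX α) p = 0 := by simp [pdy, wingX]
  have hYx : pdx (wingY α) p = 2 * (p.1 - α) * p.2 := by simp [pdx, wingY]
  have hYy : pdy (wingY α) p = (p.1 - α) ^ 2 := by simp [pdy, wingY]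
  rw [divergence_rellich lam hu (contDiff_wingX.differentiable one_ne_zero)
    (contDiff_wingY.differentiable one_ne_zero), divergence, hXx, hXy, hYx, hYy, gradSq]
  ring

theorem fst_sub_mem_Icc_of_mem_rightWing (hβ : 0 ≤ β) (hp : p ∈ RightWing α β) :
    p.1 - α ∈ Icc 0 β :=
  ⟨sub_nonneg.2 hp.2, sub_le_iff_le_add'.2
    ((mem_rightWing_iff_snd_mem_Icc hβ p.1 p.2).1 hp).1.2⟩

theorem divergence_rellich_wing_le (hβ : 0 ≤ β) (hu : ContDiff ℝ 2 u) (hp : p ∈ RightWing α β) :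
    divergence (rellichX lam u (wingX α) (wingY α)) (rellichY lam u (wingX α) (wingY α)) p
      ≤ 4 * β * ((p.1 - α) * gradSq u p) + 4 * lam ^ 2 * β ^ 2 * u p ^ 2
        - 2 * (helmholtz lam u p * derivAlong (wingX α) (wingY α) u p) := by
  obtain ⟨hs, hsβ⟩ := fst_sub_mem_Icc_of_mem_rightWing hβ hp
  obtain ⟨hy, hy'⟩ := ((mem_rightWing_iff_fst_mem_Icc hβ p.1 p.2).1 hp).1
  rw [divergence_rellich_wing hu]
  have hdiag : (p.1 - α) * (pdx u p ^ 2 - pdy u p ^ 2) ≤ β * gradSq u p := by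
    unfold gradSq
    nlinarith [sq_nonneg (pdx u p), sq_nonneg (pdy u p)]
  have hcross : 2 * p.2 * (pdx u p * pdy u p) ≤ β * gradSq u p := by
    unfold gradSq
    nlinarith [sq_nonneg (pdx u p - pdy u p), sq_nonneg (pdx u p + pdy u p)]
  have hmass : (p.1 - α) ^ 2 * (lam * u p) ^ 2 ≤ β ^ 2 * (lam * u p) ^ 2 :=
    mul_le_mul_of_nonneg_right (pow_le_pow_left₀ hs hsβ 2) (sq_nonneg _)
  linarith [mul_le_mul_of_nonneg_left (add_le_add hdiag hcross) hs]

theorem sq_derivAlong_wing_le (hβ : 0 ≤ β) (hp : p ∈ RightWing α β) :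
    derivAlong (wingX α) (wingY α) u p ^ 2 ≤ (β ^ 2) ^ 2 * (β * ((p.1 - α) * gradSq u p)) := by
  obtain ⟨hs, hsβ⟩ := fst_sub_mem_Icc_of_mem_rightWing hβ hp
  calc derivAlong (wingX α) (wingY α) u p ^ 2
      ≤ (wingX α p ^ 2 + wingY α p ^ 2) * gradSq u p := sq_derivAlong_le _ _ p
    _ = (p.1 - α) ^ 3 * ((p.1 - α) ^ 2 + p.2 ^ 2) * ((p.1 - α) * gradSq u p) := by
        unfold wingX wingY; ring
    _ ≤ β ^ 3 * β ^ 2 * ((p.1 - α) * gradSq u p) :=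
        mul_le_mul_of_nonneg_right (mul_le_mul (pow_le_pow_left₀ hs hsβ 3) hp.1 (by positivity)
          (by positivity)) (mul_nonneg hs (gradSq_nonneg p))
    _ = (β ^ 2) ^ 2 * (β * ((p.1 - α) * gradSq u p)) := by ring

theorem mul_rightArcInt_sq_le_setIntegral (hα : 0 ≤ α) (hβ : 0 < β) (hu : ContDiff ℝ 2 u)
    (hu0 : ∀ q ∈ StadiumBoundary α β, u q = 0) :
    β ^ 3 * rightArcInt α β (fun p n => n.1 ^ 2 * nderiv u p n ^ 2)
      ≤ ∫ p in RightWing α β,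
        divergence (rellichX lam u (wingX α) (wingY α)) (rellichY lam u (wingX α) (wingY α)) p := by
  rw [← rightArcInt_const_mul]
  simp only [← mul_assoc (β ^ 3)]
  refine rightArcInt_le_setIntegral_divergence_rellich (c := fun _ n => β ^ 3 * n.1 ^ 2) hα hβ hu
    hu0 contDiff_wingX contDiff_wingY (by fun_prop) (by simp [wingX]) (by simp [wingY])
    fun p n h hn => ?_
  rw [h.eq_of_fst_pos hn]
  simp only [normalFlux, wingX, wingY]
  linear_combination -β ^ 3 * n.1 ^ 2 * h.sq_add_sq

theorem mul_rightArcInt_sq_le (hα : 0 ≤ α) (hβ : 0 < β) (hu : ContDiff ℝ 2 u)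
    (hu0 : ∀ q ∈ StadiumBoundary α β, u q = 0) :
    β ^ 3 * rightArcInt α β (fun p n => n.1 ^ 2 * nderiv u p n ^ 2)
      ≤ 4 * β * (∫ p in RightWing α β, (p.1 - α) * gradSq u p)
        + 4 * lam ^ 2 * β ^ 2 * l2Norm (RightWing α β) u ^ 2
        + 2 * β ^ 2 * (l2Norm (RightWing α β) (helmholtz lam u)
          * √(β * ∫ p in RightWing α β, (p.1 - α) * gradSq u p)) := by
  have hT := isCompact_rightWing (α := α) hβ.le
  have hX := contDiff_wingX (α := α)
  have hY := contDiff_wingY (α := α)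
  have hu1 : ContDiff ℝ 1 u := hu.of_le one_le_two
  have cu : Continuous u := hu.continuous
  have cgrad : Continuous (gradSq u) := continuous_gradSq hu1
  have ch : Continuous (helmholtz lam u) := continuous_helmholtz hu
  have cD : Continuous (derivAlong (wingX α) (wingY α) u) :=
    continuous_derivAlong hX.continuous hY.continuous hu1
  have hint {g : ℝ × ℝ → ℝ} (hg : Continuous g) := integrableOn_of_continuous hT hg
  have hbulk := setIntegral_mono_on
    (hint (continuous_divergence (contDiff_rellichX (lam := lam) hu hX hY)
      (contDiff_rellichY hu hX hY)))
    (hint (by fun_prop)) hT.measurableSet fun p hp => divergence_rellich_wing_le hβ.le hu hp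
  rw [integral_sub (hint (by fun_prop)) (hint (by fun_prop)),
    integral_add (hint (by fun_prop)) (hint (by fun_prop)), integral_const_mul,
    integral_const_mul, integral_const_mul, ← sq_l2Norm] at hbulk
  have cauchy := abs_setIntegral_mul_le_mul_sqrt hT ch cD
    (by fun_prop : Continuous fun p => β * ((p.1 - α) * gradSq u p)) (sq_nonneg β)
    fun p hp => sq_derivAlong_wing_le hβ.le hp
  rw [integral_const_mul] at cauchy
  linarith [mul_rightArcInt_sq_le_setIntegral (lam := lam) hα hβ hu hu0,
    neg_abs_le (∫ p in RightWing α β,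
      helmholtz lam u p * derivAlong (wingX α) (wingY α) u p)]

theorem setIntegral_rightWing_mul_gradSq_le (hα : 0 ≤ α) (hβ : 0 ≤ β) (hu : ContDiff ℝ 2 u)
    (hu0 : ∀ q ∈ StadiumBoundary α β, u q = 0) :
    ∫ p in RightWing α β, (p.1 - α) * gradSq u p
      ≤ lam ^ 2 * β * l2Norm (RightWing α β) u ^ 2
        + β * (l2Norm (RightWing α β) u * l2Norm (RightWing α β) (helmholtz lam u))
        + l2Norm (RightWing α β) u * l2Norm (RightWing α β) (pdx u) := by
  have hT := isCompact_rightWing (α := α) hβ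
  have hu1 : ContDiff ℝ 1 u := hu.of_le one_le_two
  have cu : Continuous u := hu.continuous
  have ch : Continuous (helmholtz lam u) := continuous_helmholtz hu
  have hφ : ContDiff ℝ 1 fun p : ℝ × ℝ => p.1 - α := by fun_prop
  have green := setIntegral_mul_gradSq (lam := lam) hT hu hφ
  have hflux := setIntegral_divergence_rightWing_nonpos hβ
    ((hφ.mul hu1).mul (contDiff_pdx hu one_add_one_eq_two.le))
    ((hφ.mul hu1).mul (contDiff_pdy hu one_add_one_eq_two.le)) (by simp)
    fun p n h => (normalFlux_mul_mul_grad hα hβ hu0 h).le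
  have hderiv : derivAlong (pdx fun p => p.1 - α) (pdy fun p => p.1 - α) u = pdx u := by
    ext p
    simp [derivAlong, pdx, pdy]
  rw [hderiv] at green
  have hmass : ∫ p in RightWing α β, (p.1 - α) * u p ^ 2
      ≤ β * l2Norm (RightWing α β) u ^ 2 := by
    rw [sq_l2Norm, ← integral_const_mul]
    exact setIntegral_mono_on (integrableOn_of_continuous hT (by fun_prop))
      (integrableOn_of_continuous hT (by fun_prop)) hT.measurableSet fun p hp =>
        mul_le_mul_of_nonneg_right (fst_sub_mem_Icc_of_mem_rightWing hβ hp).2 (sq_nonneg _)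
  have hsource : |∫ p in RightWing α β, u p * ((p.1 - α) * helmholtz lam u p)|
      ≤ l2Norm (RightWing α β) u * (β * l2Norm (RightWing α β) (helmholtz lam u)) :=
    abs_setIntegral_mul_le_mul_sqrt hT cu (by fun_prop) (ch.pow 2) hβ fun p hp => by
      obtain ⟨hs, hsβ⟩ := fst_sub_mem_Icc_of_mem_rightWing hβ hp
      rw [mul_pow]
      exact mul_le_mul_of_nonneg_right (pow_le_pow_left₀ hs hsβ 2) (sq_nonneg _)
  have hboundary := abs_setIntegral_mul_le hT cu (contDiff_pdx hu1 (zero_add 1).le).continuous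
  linarith [mul_le_mul_of_nonneg_left hmass (sq_nonneg lam),
    le_abs_self (∫ p in RightWing α β, u p * ((p.1 - α) * helmholtz lam u p)),
    neg_abs_le (∫ p in RightWing α β, u p * pdx u p)]

end WingEstimates

section AprioriEstimate

variable {α β lam : ℝ} {u : ℝ × ℝ → ℝ}

theorem mul_rightArcInt_le_sq_mul (hα : 0 ≤ α) (hβ : 0 < β) (hlam : 1 ≤ lam)
    (hu : ContDiff ℝ 2 u) (hu0 : ∀ q ∈ StadiumBoundary α β, u q = 0) :
    β * rightArcInt α β (fun p n => nderiv u p n ^ 2)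
      ≤ lam ^ 2 * (16 * (α + β) ^ 2 * l2Norm (Stadium α β) (pdx u) ^ 2
        + (4 * (α + β) ^ 2 + 1) * l2Norm (Stadium α β) (helmholtz lam u) ^ 2) := by
  have rellich := mul_rightArcInt_le (lam := lam) hα hβ hu hu0
  have energy := setIntegral_gradSq_le (lam := lam) hα hβ.le hu hu0
  have poincare := l2Norm_le_l2Norm_pdx hα hβ.le (hu.of_le one_le_two) hu0
  have hE : 0 ≤ ∫ p in Stadium α β, gradSq u p := integral_nonneg gradSq_nonneg
  have hN := l2Norm_nonneg (Stadium α β) u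
  set N := l2Norm (Stadium α β) u
  set ν := l2Norm (Stadium α β) (helmholtz lam u)
  set a := l2Norm (Stadium α β) (pdx u)
  set E := ∫ p in Stadium α β, gradSq u p
  have hNa : N ^ 2 ≤ 4 * (α + β) ^ 2 * a ^ 2 := by
    linarith [pow_le_pow_left₀ hN poincare 2]
  have amgm : 4 * (α + β) * ν * √E ≤ 4 * (α + β) ^ 2 * ν ^ 2 + E := by
    linarith [sq_nonneg (2 * (α + β) * ν - √E), sq_sqrt hE]
  have hlow : 4 * (α + β) ^ 2 * ν ^ 2 + N * ν
      ≤ lam ^ 2 * (N ^ 2 + (4 * (α + β) ^ 2 + 1) * ν ^ 2) := by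
    refine le_trans ?_ (le_mul_of_one_le_left (by positivity) (one_le_pow₀ hlam))
    nlinarith [sq_nonneg (N - ν), sq_nonneg N, sq_nonneg ν]
  linarith [mul_le_mul_of_nonneg_left hNa (sq_nonneg lam)]

theorem pow_four_mul_setIntegral_le (hα : 0 ≤ α) (hβ : 0 ≤ β) (hlam : 1 ≤ lam)
    (hu : ContDiff ℝ 2 u) (hu0 : ∀ q ∈ StadiumBoundary α β, u q = 0) {t : ℝ}
    (ht : t = l2Norm (Stadium α β) (helmholtz lam u) + lam ^ 4 * l2Norm (RightWing α β) u) :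
    lam ^ 4 * (∫ p in RightWing α β, (p.1 - α) * gradSq u p)
      ≤ 2 * β * t ^ 2 + t * l2Norm (Stadium α β) (pdx u) := by
  have green := setIntegral_rightWing_mul_gradSq_le (lam := lam) hα hβ hu hu0
  have hν := l2Norm_rightWing_le (α := α) hβ (continuous_helmholtz (lam := lam) hu)
  have ha := l2Norm_rightWing_le (α := α) hβ
    (contDiff_pdx (hu.of_le one_le_two) (zero_add 1).le).continuous
  have hw := l2Norm_nonneg (RightWing α β) u
  have hν0 := l2Norm_nonneg (RightWing α β) (helmholtz lam u)
  have ha0 := l2Norm_nonneg (RightWing α β) (pdx u)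
  set w := l2Norm (RightWing α β) u
  set ν := l2Norm (Stadium α β) (helmholtz lam u)
  set a := l2Norm (Stadium α β) (pdx u)
  have hm : 0 ≤ lam ^ 4 * w := by positivity
  have hmass : lam ^ 4 * (lam ^ 2 * w ^ 2) ≤ t ^ 2 :=
    calc lam ^ 4 * (lam ^ 2 * w ^ 2) = lam ^ 6 * w ^ 2 := by ring
      _ ≤ lam ^ 8 * w ^ 2 := by gcongr; norm_num
      _ = (lam ^ 4 * w) ^ 2 := by ring
      _ ≤ t ^ 2 := by gcongr; linarith
  have hsource : lam ^ 4 * w * l2Norm (RightWing α β) (helmholtz lam u) ≤ t ^ 2 := by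
    rw [sq]; gcongr <;> linarith
  have hboundary : lam ^ 4 * w * l2Norm (RightWing α β) (pdx u) ≤ t * a := by
    gcongr <;> linarith
  linarith [mul_le_mul_of_nonneg_left green (by positivity : 0 ≤ lam ^ 4),
    mul_le_mul_of_nonneg_left hmass hβ, mul_le_mul_of_nonneg_left hsource hβ]

theorem sq_mul_rightArcInt_sq_le (hα : 0 ≤ α) (hβ : 0 < β) (hlam : 1 ≤ lam)
    (hu : ContDiff ℝ 2 u) (hu0 : ∀ q ∈ StadiumBoundary α β, u q = 0) {t : ℝ}
    (ht : t = l2Norm (Stadium α β) (helmholtz lam u) + lam ^ 4 * l2Norm (RightWing α β) u) :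
    β ^ 2 * (lam ^ 2 * rightArcInt α β (fun p n => n.1 ^ 2 * nderiv u p n ^ 2))
      ≤ (4 + β ^ 2) * (2 * β * t ^ 2 + t * l2Norm (Stadium α β) (pdx u)) + 5 * β * t ^ 2 := by
  have hG : 0 ≤ ∫ p in RightWing α β, (p.1 - α) * gradSq u p :=
    setIntegral_nonneg (isCompact_rightWing hβ.le).measurableSet fun p hp =>
      mul_nonneg (fst_sub_mem_Icc_of_mem_rightWing hβ.le hp).1 (gradSq_nonneg p)
  have rellich := mul_rightArcInt_sq_le (lam := lam) hα hβ hu hu0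
  have green := pow_four_mul_setIntegral_le hα hβ.le hlam hu hu0 ht
  have hν := l2Norm_rightWing_le (α := α) hβ.le (continuous_helmholtz (lam := lam) hu)
  have hw := l2Norm_nonneg (RightWing α β) u
  have hν0 := l2Norm_nonneg (RightWing α β) (helmholtz lam u)
  set G := ∫ p in RightWing α β, (p.1 - α) * gradSq u p
  set P := rightArcInt α β fun p n => n.1 ^ 2 * nderiv u p n ^ 2
  set w := l2Norm (RightWing α β) u
  set ν := l2Norm (RightWing α β) (helmholtz lam u)
  have hm : 0 ≤ lam ^ 4 * w := by positivity
  have hscaled : β ^ 2 * (lam ^ 2 * P)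
      ≤ 4 * lam ^ 2 * G + 4 * β * lam ^ 4 * w ^ 2 + 2 * β * lam ^ 2 * (ν * √(β * G)) := by
    refine le_of_mul_le_mul_left ?_ hβ
    linarith [mul_le_mul_of_nonneg_left rellich (sq_nonneg lam)]
  have amgm : 2 * lam ^ 2 * (ν * √(β * G)) ≤ ν ^ 2 + β * lam ^ 4 * G := by
    linear_combination sq_nonneg (ν - lam ^ 2 * √(β * G))
      + lam ^ 4 * sq_sqrt (mul_nonneg hβ.le hG)
  have hlamG : lam ^ 2 * G ≤ lam ^ 4 * G := by gcongr; norm_num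
  have hmass : lam ^ 4 * w ^ 2 ≤ t ^ 2 :=
    calc lam ^ 4 * w ^ 2 ≤ lam ^ 8 * w ^ 2 := by gcongr; norm_num
      _ = (lam ^ 4 * w) ^ 2 := by ring
      _ ≤ t ^ 2 := by gcongr; linarith
  have hνt : ν ^ 2 ≤ t ^ 2 := by gcongr; linarith
  linarith [mul_le_mul_of_nonneg_left amgm hβ.le, mul_le_mul_of_nonneg_left hmass hβ.le,
    mul_le_mul_of_nonneg_left hνt hβ.le,
    mul_le_mul_of_nonneg_left green (by positivity : 0 ≤ 4 + β ^ 2)]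

theorem add_mul_two_mul_rightArcInt_le (hα : 0 ≤ α) (hβ : 0 < β) (hlam : 1 ≤ lam)
    (hu : ContDiff ℝ 2 u) (hu0 : ∀ q ∈ StadiumBoundary α β, u q = 0) {t : ℝ}
    (ht : t = l2Norm (Stadium α β) (helmholtz lam u) + lam ^ 4 * l2Norm (RightWing α β) u) :
    (α + β) * (2 * rightArcInt α β fun p n => n.1 * nderiv u p n ^ 2)
      ≤ l2Norm (Stadium α β) (pdx u) ^ 2
        + (4 * (α + β) ^ 2 + 1) / (16 * (α + β) ^ 2) * t ^ 2
        + 16 * (α + β) ^ 4 / β ^ 3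
          * ((4 + β ^ 2) * (2 * β * t ^ 2 + t * l2Norm (Stadium α β) (pdx u)) + 5 * β * t ^ 2) := by
  have : 0 < α + β := by positivity
  have : 0 < lam := one_pos.trans_le hlam
  have full := mul_rightArcInt_le_sq_mul hα hβ hlam hu hu0
  have degenerate := sq_mul_rightArcInt_sq_le hα hβ hlam hu hu0 ht
  have young := two_mul_rightArcInt_le (α := α) (ε := β / (16 * (α + β) ^ 3) / lam ^ 2) hβ.le
    (hu.of_le one_le_two) (by positivity)
  have hνt : l2Norm (Stadium α β) (helmholtz lam u) ^ 2 ≤ t ^ 2 := by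
    have := l2Norm_nonneg (Stadium α β) (helmholtz lam u)
    have := l2Norm_nonneg (RightWing α β) u
    rw [ht]
    gcongr
    exact le_add_of_nonneg_right (by positivity)
  set a := l2Norm (Stadium α β) (pdx u)
  set ν := l2Norm (Stadium α β) (helmholtz lam u)
  set P₀ := rightArcInt α β fun p n => nderiv u p n ^ 2
  set P₂ := rightArcInt α β fun p n => n.1 ^ 2 * nderiv u p n ^ 2
  set D := (4 + β ^ 2) * (2 * β * t ^ 2 + t * a) + 5 * β * t ^ 2
  calc (α + β) * (2 * rightArcInt α β fun p n => n.1 * nderiv u p n ^ 2)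
      ≤ (α + β) * (β / (16 * (α + β) ^ 3) / lam ^ 2 * P₀
        + (β / (16 * (α + β) ^ 3) / lam ^ 2)⁻¹ * P₂) := by gcongr
    _ = 1 / (16 * (α + β) ^ 2 * lam ^ 2) * (β * P₀)
        + 16 * (α + β) ^ 4 / β ^ 3 * (β ^ 2 * (lam ^ 2 * P₂)) := by field_simp
    _ ≤ 1 / (16 * (α + β) ^ 2 * lam ^ 2)
          * (lam ^ 2 * (16 * (α + β) ^ 2 * a ^ 2 + (4 * (α + β) ^ 2 + 1) * t ^ 2))
        + 16 * (α + β) ^ 4 / β ^ 3 * D := by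
        exact add_le_add (mul_le_mul_of_nonneg_left (full.trans (by gcongr)) (by positivity))
          (mul_le_mul_of_nonneg_left degenerate (by positivity))
    _ = a ^ 2 + (4 * (α + β) ^ 2 + 1) / (16 * (α + β) ^ 2) * t ^ 2
        + 16 * (α + β) ^ 4 / β ^ 3 * D := by field_simp

theorem exists_sq_l2Norm_pdx_le (hα : 0 ≤ α) (hβ : 0 < β) :
    ∃ B, 0 ≤ B ∧ ∀ {lam : ℝ} {u : ℝ × ℝ → ℝ}, 1 ≤ lam → ContDiff ℝ 2 u →
      (∀ q ∈ StadiumBoundary α β, u q = 0) → ∀ {t : ℝ},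
      t = l2Norm (Stadium α β) (helmholtz lam u) + lam ^ 4 * l2Norm (RightWing α β) u →
      l2Norm (Stadium α β) (pdx u) ^ 2 ≤ B * (t * l2Norm (Stadium α β) (pdx u) + t ^ 2) := by
  have hL : 0 < α + β := by positivity
  set K := (4 * (α + β) ^ 2 + 1) / (16 * (α + β) ^ 2) with hK
  set M := 16 * (α + β) ^ 4 / β ^ 3 with hM
  have : 0 ≤ K := by positivity
  have : 0 ≤ M := by positivity
  refine ⟨6 * (α + β) + K + M * ((4 + β ^ 2) * (2 * β + 1) + 5 * β), by positivity,
    fun {lam u} hlam hu hu0 {t} ht => ?_⟩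
  have rellich := sq_l2Norm_pdx_le (lam := lam) hα hβ hu hu0
  have arc := add_mul_two_mul_rightArcInt_le hα hβ hlam hu hu0 ht
  rw [← hK, ← hM] at arc
  have ha := l2Norm_nonneg (Stadium α β) (pdx u)
  have hν := l2Norm_nonneg (Stadium α β) (helmholtz lam u)
  have hm : 0 ≤ lam ^ 4 * l2Norm (RightWing α β) u := mul_nonneg (by positivity) (l2Norm_nonneg _ _)
  set a := l2Norm (Stadium α β) (pdx u)
  have ht0 : 0 ≤ t := by linarith
  have hνa : l2Norm (Stadium α β) (helmholtz lam u) * a ≤ t * a := by gcongr; linarith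
  have hslack : 0 ≤ 6 * (α + β) * t ^ 2 + K * (t * a)
      + M * ((4 + β ^ 2) * (2 * β) * (t * a) + (4 + β ^ 2) * t ^ 2 + 5 * β * (t * a)) := by
    positivity
  linarith [mul_le_mul_of_nonneg_left hνa hL.le]

theorem le_mul_of_sq_le_mul_add_sq {a t B : ℝ} (ht : 0 ≤ t) (hB : 0 ≤ B)
    (h : a ^ 2 ≤ B * (t * a + t ^ 2)) : a ≤ (B + 1) * t := by
  by_contra! hlt
  have ha : 0 < a := (mul_nonneg (add_nonneg hB zero_le_one) ht).trans_lt hlt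
  linarith [mul_pos (sub_pos.2 hlt) (add_pos_of_pos_of_nonneg ha ht), sq_nonneg t]

theorem exists_l2Norm_stadium_le (hα : 0 ≤ α) (hβ : 0 < β) :
    ∃ C > 0, ∀ {lam : ℝ} {u : ℝ × ℝ → ℝ}, 1 ≤ lam → ContDiff ℝ 2 u →
      (∀ q ∈ StadiumBoundary α β, u q = 0) →
      l2Norm (Stadium α β) u
        ≤ C * (l2Norm (Stadium α β) (helmholtz lam u) + lam ^ 4 * l2Norm (RightWing α β) u) := by
  obtain ⟨B, hB, bound⟩ := exists_sq_l2Norm_pdx_le hα hβ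
  refine ⟨2 * (α + β) * (B + 1), by positivity, fun {lam u} hlam hu hu0 => ?_⟩
  have ht := add_nonneg (l2Norm_nonneg (Stadium α β) (helmholtz lam u))
    (mul_nonneg (by positivity : 0 ≤ lam ^ 4) (l2Norm_nonneg (RightWing α β) u))
  calc l2Norm (Stadium α β) u
      ≤ 2 * (α + β) * l2Norm (Stadium α β) (pdx u) :=
        l2Norm_le_l2Norm_pdx hα hβ.le (hu.of_le one_le_two) hu0
    _ ≤ 2 * (α + β) * ((B + 1)
        * (l2Norm (Stadium α β) (helmholtz lam u) + lam ^ 4 * l2Norm (RightWing α β) u)) := by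
        gcongr
        exact le_mul_of_sq_le_mul_add_sq ht hB (bound hlam hu hu0 rfl)
    _ = _ := (mul_assoc ..).symm

end AprioriEstimate

section Extension

variable {E : Type*} [NormedAddCommGroup E] [NormedSpace ℝ E] [FiniteDimensional ℝ E]

theorem exists_contDiff_eventuallyEq {n : ℕ∞} {u : E → ℝ} {S V : Set E} (hV : IsOpen V)
    (hS : IsClosed S) (hSV : S ⊆ V) (hu : ContDiffOn ℝ n u V) :
    ∃ v : E → ℝ, ContDiff ℝ n v ∧ ∀ p ∈ S, u =ᶠ[nhds p] v := by
  obtain ⟨ψ, hzero, hone, -⟩ := exists_contMDiffMap_zero_one_nhds_of_isClosed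
    (modelWithCornersSelf ℝ E) (n := n) hV.isClosed_compl hS
    (disjoint_compl_left_iff_subset.2 hSV)
  have hψ : ContDiff ℝ n ψ := ψ.contMDiff.contDiff
  refine ⟨fun p => ψ p * u p, contDiff_iff_contDiffAt.2 fun p => ?_, fun p hp => ?_⟩
  · by_cases hp : p ∈ V
    · exact hψ.contDiffAt.mul (hu.contDiffAt (hV.mem_nhds hp))
    · refine (contDiffAt_const (c := (0 : ℝ))).congr_of_eventuallyEq ?_
      filter_upwards [eventually_nhdsSet_iff_forall.1 hzero p hp] with q hq
      rw [hq, zero_mul]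
  · filter_upwards [eventually_nhdsSet_iff_forall.1 hone p hp] with q hq
    rw [hq, one_mul]

end Extension

namespace QMDatum

variable {α β : ℝ}

theorem exists_contDiff_two_eventuallyEq (hβ : 0 ≤ β) (d : QMDatum α β) :
    ∃ v : ℝ × ℝ → ℝ, ContDiff ℝ 2 v ∧ ∀ p ∈ Stadium α β, d.u =ᶠ[nhds p] v := by
  obtain ⟨V, hV, hSV, hu⟩ := d.smooth
  exact exists_contDiff_eventuallyEq (n := 2) hV (isCompact_stadium hβ).isClosed hSV
    (hu.of_le (WithTop.coe_le_coe.2 le_top))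

theorem exists_l2Norm_le (hα : 0 ≤ α) (hβ : 0 < β) :
    ∃ C > 0, ∀ d : QMDatum α β, 1 ≤ d.lam →
      l2Norm (Stadium α β) d.u
        ≤ C * (l2Norm (Stadium α β) d.f + d.lam ^ 4 * l2Norm (RightWing α β) d.u) := by
  obtain ⟨C, hC, bound⟩ := exists_l2Norm_stadium_le hα hβ
  refine ⟨C, hC, fun d hlam => ?_⟩
  obtain ⟨v, hv, huv⟩ := d.exists_contDiff_two_eventuallyEq hβ.le
  have hS := (isCompact_stadium (α := α) hβ.le).measurableSet
  have hT := (isCompact_rightWing (α := α) hβ.le).measurableSet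
  have hu : EqOn d.u v (Stadium α β) := fun p hp => (huv p hp).eq_of_nhds
  have hf : EqOn d.f (helmholtz d.lam v) (Stadium α β) := fun p hp => by
    rw [← d.eqn p hp, helmholtz, lap_congr (huv p hp), hu hp]
  have hv0 : ∀ q ∈ StadiumBoundary α β, v q = 0 := fun q hq =>
    (hu (stadiumBoundary_subset hβ.le hq)).symm.trans (d.dirichlet q hq)
  rw [l2Norm_congr hS hu, l2Norm_congr hS hf,
    l2Norm_congr hT (hu.mono (rightWing_subset_wings.trans wings_subset_stadium))]
  exact bound hlam hv hv0

theorem l2Norm_rightWing_le_l2Norm_wings (hβ : 0 ≤ β) (d : QMDatum α β) :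
    l2Norm (RightWing α β) d.u ≤ l2Norm (Wings α β) d.u := by
  obtain ⟨V, -, hSV, hu⟩ := d.smooth
  exact l2Norm_mono_set rightWing_subset_wings
    ((((hu.continuousOn.mono hSV).pow 2).integrableOn_compact (isCompact_stadium hβ)).mono_set
      wings_subset_stadium)

end QMDatum

theorem stmt4_general (α β : ℝ) (hα : 0 ≤ α) (hβ : 0 < β) :
    ∃ C > 0, ∃ δ > 0, ∀ d : QMDatum α β, (∫ p in Stadium α β, (d.u p) ^ 2) = 1 →
      1 ≤ d.lam → √(∫ p in Stadium α β, (d.f p) ^ 2) ≤ δ →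
      √(∫ p in RightWing α β, (d.u p) ^ 2) ≥ C / d.lam ^ 4 := by
  obtain ⟨C, hC, bound⟩ := QMDatum.exists_l2Norm_le hα hβ
  refine ⟨1 / (2 * C), by positivity, 1 / (2 * C), by positivity, fun d hu hlam hf => ?_⟩
  have : 0 < d.lam ^ 4 := pow_pos d.lam_pos 4
  have hmass := bound d hlam
  simp only [l2Norm, hu, sqrt_one] at hmass
  rw [ge_iff_le, div_div, div_le_iff₀ (by positivity)]
  have hCf : C * √(∫ p in Stadium α β, d.f p ^ 2) ≤ 1 / 2 := by
    calc C * √(∫ p in Stadium α β, d.f p ^ 2) ≤ C * (1 / (2 * C)) := by gcongr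
      _ = 1 / 2 := by field_simp
  linarith

/-- There is `C > 0` depending only on `α, β` such that for every sequence of
real Dirichlet quasimode data with `‖u_k‖_{L²(S)} = 1`, `λ_k → ∞` and `‖f_k‖_{L²(S)} → 0`
(an `o(1)` quasimode), one has `‖u_k‖_{L²(W)} ≥ C λ_k⁻⁴` for all large `k`. -/
theorem stmt4 (α β : ℝ) (hα : 0 < α) (hβ : 0 < β) :
    ∃ C > 0, ∀ d : ℕ → QMDatum α β,
      (∀ k, (∫ p in Stadium α β, ((d k).u p) ^ 2) = 1) →
      Tendsto (fun k => (d k).lam) atTop atTop →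
      Tendsto (fun k => Real.sqrt (∫ p in Stadium α β, ((d k).f p) ^ 2)) atTop (nhds 0) →
      ∀ᶠ k in atTop,
        Real.sqrt (∫ p in Wings α β, ((d k).u p) ^ 2) ≥ C / (d k).lam ^ 4 := by
  obtain ⟨C, hC, δ, hδ, bound⟩ := stmt4_general α β hα.le hβ
  refine ⟨C, hC, fun d hu hlam hf => ?_⟩
  filter_upwards [hlam.eventually_ge_atTop 1, hf.eventually_le_const hδ] with k hk hfk
  exact (bound (d k) (hu k) hk hfk).trans ((d k).l2Norm_rightWing_le_l2Norm_wings hβ.le)
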